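/- Let D be a non-trivial, non-symmetric 2-(v,k,3) design with 3 dividing r, admitting a flag-transitive, point-primitive automorphism group G that is almost simple with socle X = PSL(2,q), where X acts point-primitively on D with point stabilizer X_α maximal in X. Suppose X_α ≅ C_p^f ⋊ C_{(q−1)/gcd(2,q−1)} is the stabilizer of a point in the natural action of X on PG(1,q), where q = p^f, so that v = q+1. Then one of the following holds: (1) q = 4, D is the complete 2-(5,3,3) design and PSL(2,4) ⊴ G ≤ PΓL(2,4); (2) q = 25, D is the 2-(26,6,3) design whose blocks form one PSL(2,25)-orbit of Baer sublines PG(1,5) of PG(1,25), and PSL(2,25) ⊴ G ≤ PΣL(2,25). -/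

import Mathlib

/-!
If `q = 4`, then `v = 5` and `k = 3`; two points lie in exactly three triples, so all triples are
blocks (`complete_of_card_five`).

Let `q ≥ 5`. Under the isomorphism of `X` with `PSL(2,q)`, the stabilizer `X_α` becomes a maximal
subgroup isomorphic to a Borel subgroup. Its subgroup corresponding to the translations is a
`p`-group, so it fixes a point of the line (`q + 1` is prime to `p`), and only one, because a
`p`-element fixing two points is trivial; hence `X_α` fixes that point and is its stabilizer
(`exists_point_of_borel`). The action of `X` on the points is therefore the natural action on
`PG(1,q)` (`exists_equivariant_equiv`), and the design may be moved to the line.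

There, `r (k - 1) = 3 q` and `3 ∣ r` show that `k - 1` divides `q`. The homotheties `x ↦ a² x`
form a cyclic group that permutes the three blocks on `0` and `∞`, so the `e`-th power of a generator
fixes these blocks for some `e ≤ 3` (`blocks_through_two`). The other `k - 2` points of such a
block fall into regular orbits, whence `(q - 1) / gcd(q - 1, 2e)` divides `k - 2`. With `b k = v r`,
this leaves `q = 25`, `k = 6`, `e = 3` (`parameter_arith`). So a block on `0` and `∞` is
`{0, ∞} ∪ c 𝔽₅*`, a Baer subline; the three such blocks are permuted transitively since `e = 3`,
and `PSL(2,25)` is transitive on ordered pairs of points, so the blocks form one orbit.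

Finally, an element of `G` normalizes `PSL(2,25)`. Modulo `PSL(2,25)` it fixes `0`, `∞` and the block
`{0, ∞} ∪ c 𝔽₅*`, so it is `x ↦ a σ(x)` for a field automorphism `σ` (`normalizer_fix_two`)
with `a σ(c) ∈ c 𝔽₅*`. Elements of `𝔽₅*` and the quotient `c / σ(c)` are squares in `𝔽₂₅`, so `a` is
a square and the element lies in `PΣL(2,25)`. All of this is collected in `line_design`.
-/

open scoped Pointwise
open Matrix Projectivization

noncomputable section

namespace FT

variable (F : Type) [Field F]

/-- The projective line `PG(1,q)` over a field `F`. -/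
abbrev PG1 := Projectivization F (Fin 2 → F)

/-- The semilinear bijection of `F²` attached to a field automorphism `σ` and a
matrix `g ∈ GL(2,F)`, namely `v ↦ g ⬝ (σ ∘ v)`. -/
def semilinearAux (σ : F ≃+* F) (g : GL (Fin 2) F) :
    (Fin 2 → F) →ₛₗ[(σ : F →+* F)] (Fin 2 → F) where
  toFun v := (g : Matrix (Fin 2) (Fin 2) F).mulVec (fun i => σ (v i))
  map_add' v w := show (g : Matrix (Fin 2) (Fin 2) F).mulVec (fun i => σ ((v + w) i)) =
      (g : Matrix (Fin 2) (Fin 2) F).mulVec (fun i => σ (v i)) +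
        (g : Matrix (Fin 2) (Fin 2) F).mulVec (fun i => σ (w i)) by
    have h1 : (fun i => σ ((v + w) i)) = (fun i => σ (v i)) + (fun i => σ (w i)) := by
      funext i; simp
    rw [h1, Matrix.mulVec_add]
  map_smul' c v := show (g : Matrix (Fin 2) (Fin 2) F).mulVec (fun i => σ ((c • v) i)) =
      σ c • (g : Matrix (Fin 2) (Fin 2) F).mulVec (fun i => σ (v i)) by
    have h1 : (fun i => σ ((c • v) i)) = σ c • (fun i => σ (v i)) := by
      funext i; simp [mul_comm]
    rw [h1, Matrix.mulVec_smul]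

lemma semilinearAux_apply (σ : F ≃+* F) (g : GL (Fin 2) F) (v : Fin 2 → F) :
    semilinearAux F σ g v = (g : Matrix (Fin 2) (Fin 2) F).mulVec (fun i => σ (v i)) := rfl

lemma coe_unitsMap (σ : F →+* F) (g : GL (Fin 2) F) :
    ((Units.map σ.mapMatrix.toMonoidHom g : GL (Fin 2) F) : Matrix (Fin 2) (Fin 2) F) =
      (g : Matrix (Fin 2) (Fin 2) F).map σ := rfl

lemma semilinearAux_injective (σ : F ≃+* F) (g : GL (Fin 2) F) :
    Function.Injective (semilinearAux F σ g) := by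
  intro v w h
  letI := g.invertible
  have hinj : Function.Injective ((g : Matrix (Fin 2) (Fin 2) F).mulVec) :=
    Matrix.mulVec_injective_of_invertible _
  have h' : (g : Matrix (Fin 2) (Fin 2) F).mulVec (fun i => σ (v i)) =
      (g : Matrix (Fin 2) (Fin 2) F).mulVec (fun i => σ (w i)) := h
  have h2 := hinj h'
  funext i
  exact σ.injective (congrFun h2 i)

lemma semilinearAux_cancel (σ : F ≃+* F) (g : GL (Fin 2) F) (v : Fin 2 → F) :
    semilinearAux F σ.symm (Units.map (σ.symm : F →+* F).mapMatrix.toMonoidHom g⁻¹)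
      (semilinearAux F σ g v) = v := by
  simp only [semilinearAux_apply, coe_unitsMap]
  have h1 : (fun i => σ.symm (((g : Matrix (Fin 2) (Fin 2) F).mulVec
      (fun i => σ (v i))) i)) = ((g : Matrix (Fin 2) (Fin 2) F).map (σ.symm : F →+* F)).mulVec
        (fun i => σ.symm (σ (v i))) := by
    funext i
    exact RingHom.map_mulVec (σ.symm : F →+* F) _ _ i
  rw [h1]
  simp only [RingEquiv.symm_apply_apply]
  rw [Matrix.mulVec_mulVec, ← Matrix.map_mul]
  have hgg : ((g⁻¹ : GL (Fin 2) F) : Matrix (Fin 2) (Fin 2) F) *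
      ((g : GL (Fin 2) F) : Matrix (Fin 2) (Fin 2) F) = 1 := by
    rw [← Units.val_mul, inv_mul_cancel g, Units.val_one]
  rw [hgg, Matrix.map_one _ (map_zero _) (map_one _), Matrix.one_mulVec]

lemma semilinearAux_cancel' (σ : F ≃+* F) (g : GL (Fin 2) F) (v : Fin 2 → F) :
    semilinearAux F σ g
      (semilinearAux F σ.symm (Units.map (σ.symm : F →+* F).mapMatrix.toMonoidHom g⁻¹) v) = v := by
  simp only [semilinearAux_apply, coe_unitsMap]
  have h1 : (fun i => σ ((((g⁻¹ : GL (Fin 2) F) : Matrix (Fin 2) (Fin 2) F).map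
      (σ.symm : F →+* F)).mulVec (fun i => σ.symm (v i)) i)) =
      ((((g⁻¹ : GL (Fin 2) F) : Matrix (Fin 2) (Fin 2) F).map (σ.symm : F →+* F)).map
        (σ : F →+* F)).mulVec (fun i => σ (σ.symm (v i))) := by
    funext i
    exact RingHom.map_mulVec (σ : F →+* F) _ _ i
  rw [h1]
  simp only [RingEquiv.apply_symm_apply]
  rw [Matrix.map_map]
  have h2 : ((σ : F →+* F) : F → F) ∘ ((σ.symm : F →+* F) : F → F) = id := by
    funext x; simp
  rw [h2, Matrix.map_id, Matrix.mulVec_mulVec]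
  have hgg : ((g : GL (Fin 2) F) : Matrix (Fin 2) (Fin 2) F) *
      ((g⁻¹ : GL (Fin 2) F) : Matrix (Fin 2) (Fin 2) F) = 1 := by
    rw [← Units.val_mul, mul_inv_cancel g, Units.val_one]
  rw [hgg, Matrix.one_mulVec]

/-- The permutation of the projective line `PG(1,F)` induced by the projective semilinear
transformation with companion field automorphism `σ` and matrix `g ∈ GL(2,F)`. -/
def projSemilinear (σ : F ≃+* F) (g : GL (Fin 2) F) : Equiv.Perm (PG1 F) where
  toFun := Projectivization.map (semilinearAux F σ g) (semilinearAux_injective F σ g)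
  invFun := Projectivization.map
    (semilinearAux F σ.symm (Units.map (σ.symm : F →+* F).mapMatrix.toMonoidHom g⁻¹))
    (semilinearAux_injective F _ _)
  left_inv := by
    intro p
    induction p using Projectivization.ind with
    | h v hv =>
      rw [Projectivization.map_mk, Projectivization.map_mk, Projectivization.mk_eq_mk_iff]
      exact ⟨1, by rw [one_smul]; exact (semilinearAux_cancel F σ g v).symm⟩
  right_inv := by
    intro p
    induction p using Projectivization.ind with
    | h v hv =>
      rw [Projectivization.map_mk, Projectivization.map_mk, Projectivization.mk_eq_mk_iff]
      exact ⟨1, by rw [one_smul]; exact (semilinearAux_cancel' F σ g v).symm⟩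

/-- `PGL(2,F)` as a group of permutations of the projective line. -/
def PGLsub : Subgroup (Equiv.Perm (PG1 F)) :=
  Subgroup.closure {e | ∃ g : GL (Fin 2) F, e = projSemilinear F (RingEquiv.refl F) g}

/-- `PSL(2,F)` as a group of permutations of the projective line. -/
def PSLsub : Subgroup (Equiv.Perm (PG1 F)) :=
  Subgroup.closure {e | ∃ s : Matrix.SpecialLinearGroup (Fin 2) F,
    e = projSemilinear F (RingEquiv.refl F) (Matrix.SpecialLinearGroup.toGL s)}

/-- `PΣL(2,F)` as a group of permutations of the projective line. -/
def PSigmaLsub : Subgroup (Equiv.Perm (PG1 F)) :=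
  Subgroup.closure {e | ∃ (σ : F ≃+* F) (s : Matrix.SpecialLinearGroup (Fin 2) F),
    e = projSemilinear F σ (Matrix.SpecialLinearGroup.toGL s)}

/-- `PΓL(2,F)` as a group of permutations of the projective line. -/
def PGammaLsub : Subgroup (Equiv.Perm (PG1 F)) :=
  Subgroup.closure {e | ∃ (σ : F ≃+* F) (g : GL (Fin 2) F), e = projSemilinear F σ g}

/-- The canonical subline of `PG(1,F)` determined by a subfield `K` of `F`: the set of points
admitting homogeneous coordinates in `K`. -/
def canonicalSubline (K : Subfield F) : Set (PG1 F) :=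
  {p | ∃ (v : Fin 2 → F) (hv : v ≠ 0), (∀ i, v i ∈ K) ∧ p = Projectivization.mk F v hv}

/-- A subset of `PG(1,F)` is a (`K`-)Baer subline if it is the image of the canonical subline
over `K` under an element of `PGL(2,F)`. -/
def IsBaerSubline (K : Subfield F) (s : Set (PG1 F)) : Prop :=
  ∃ g : GL (Fin 2) F, s = (projSemilinear F (RingEquiv.refl F) g) '' canonicalSubline F K

end FT
end

namespace FT

variable {Pt : Type*}

/-- `IsDesign 𝓑 k lam` says that the family `𝓑` of subsets of the point set `Pt` is the
block set of a `2-(v, k, lam)` design: every block has `k` points and any two distinct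
points lie on exactly `lam` common blocks. -/
structure IsDesign (𝓑 : Set (Set Pt)) (k lam : ℕ) : Prop where
  block_card : ∀ B ∈ 𝓑, Nat.card B = k
  pair_count : ∀ x y : Pt, x ≠ y → Nat.card {B : Set Pt | B ∈ 𝓑 ∧ x ∈ B ∧ y ∈ B} = lam

/-- The group `G` acts on the design with point set `Pt` and block set `𝓑` as a group of
automorphisms. -/
def ActsOn (G : Type*) [Group G] [MulAction G Pt] (𝓑 : Set (Set Pt)) : Prop :=
  ∀ (g : G), ∀ B ∈ 𝓑, g • B ∈ 𝓑

/-- The group `G` is transitive on the flags (incident point-block pairs) of the design. -/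
def FlagTransitive (G : Type*) [Group G] [MulAction G Pt] (𝓑 : Set (Set Pt)) : Prop :=
  ∀ B ∈ 𝓑, ∀ C ∈ 𝓑, ∀ x ∈ B, ∀ y ∈ C, ∃ g : G, g • B = C ∧ g • x = y

/-- The action of `G` on `Pt` is primitive: it is transitive and every block of
imprimitivity is trivial. -/
def PointPrimitive (G : Type*) [Group G] (Pt : Type*) [MulAction G Pt] : Prop :=
  MulAction.IsPretransitive G Pt ∧
    ∀ s : Set Pt, MulAction.IsBlock G s → s.Subsingleton ∨ s = Set.univ

/-- The number of blocks of `𝓑` through the point `x` (the replication number, for a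
flag-transitive design). -/
noncomputable def repNum (𝓑 : Set (Set Pt)) (x : Pt) : ℕ :=
  Nat.card {B : Set Pt | B ∈ 𝓑 ∧ x ∈ B}

/-- The projective general linear group `PGL(2,K)`, as the quotient of `GL(2,K)` by its
center. -/
abbrev PGL2 (K : Type*) [Field K] :=
  GL (Fin 2) K ⧸ Subgroup.center (GL (Fin 2) K)

/-- The projective special linear group `PSL(2,K)`. -/
abbrev PSL2 (K : Type*) [Field K] := Matrix.ProjectiveSpecialLinearGroup (Fin 2) K

end FT

open FT

namespace FT

/-! ### Coordinates on the projective line -/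

section Coordinates

variable (F : Type) [Field F]

/-- The affine point `[x : 1]` of the projective line. -/
def ptx (x : F) : PG1 F := Projectivization.mk F ![x, 1] (fun h => one_ne_zero (congrFun h 1))

/-- The point at infinity `[1 : 0]` of the projective line. -/
def ptInf : PG1 F := Projectivization.mk F ![1, 0] (fun h => one_ne_zero (congrFun h 0))

lemma mk_eq_inf (v : Fin 2 → F) (hv : v ≠ 0) (h : v 1 = 0) :
    Projectivization.mk F v hv = ptInf F := by
  have h0 : v 0 ≠ 0 := fun h0 => hv (by ext i; fin_cases i <;> assumption)
  unfold ptInf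
  rw [Projectivization.mk_eq_mk_iff']
  exact ⟨v 0, by ext i; fin_cases i <;> simp [h]⟩

lemma mk_eq_ptx (v : Fin 2 → F) (hv : v ≠ 0) (h : v 1 ≠ 0) :
    Projectivization.mk F v hv = ptx F (v 0 / v 1) := by
  unfold ptx
  rw [Projectivization.mk_eq_mk_iff']
  exact ⟨v 1, by ext i; fin_cases i <;> simp [mul_div_cancel₀, h]⟩

lemma pt_cases (p : PG1 F) : p = ptInf F ∨ ∃ x, p = ptx F x := by
  induction p using Projectivization.ind with
  | h v hv =>
    by_cases h : v 1 = 0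
    · exact Or.inl (mk_eq_inf F v hv h)
    · exact Or.inr ⟨_, mk_eq_ptx F v hv h⟩

lemma ptx_injective : Function.Injective (ptx F) := by
  intro x y h
  unfold ptx at h
  rw [Projectivization.mk_eq_mk_iff'] at h
  obtain ⟨a, ha⟩ := h
  have h0 := congrFun ha 0
  have h1 := congrFun ha 1
  simp at h0 h1
  rw [← h0, h1, one_mul]

lemma ptx_ne_inf (x : F) : ptx F x ≠ ptInf F := by
  intro h
  unfold ptx ptInf at h
  rw [Projectivization.mk_eq_mk_iff'] at h
  obtain ⟨a, ha⟩ := h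
  have h1 := congrFun ha 1
  simp at h1

lemma perm_ext {g g' : Equiv.Perm (PG1 F)} (h0 : g (ptInf F) = g' (ptInf F))
    (h1 : ∀ x, g (ptx F x) = g' (ptx F x)) : g = g' := by
  ext p
  rcases pt_cases F p with rfl | ⟨x, rfl⟩
  · exact h0
  · exact h1 x

lemma projSemilinear_mk (σ : F ≃+* F) (g : GL (Fin 2) F) (v : Fin 2 → F) (hv : v ≠ 0) :
    ∃ hw, projSemilinear F σ g (Projectivization.mk F v hv) =
      Projectivization.mk F ((g : Matrix (Fin 2) (Fin 2) F).mulVec (fun i => σ (v i))) hw :=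
  ⟨_, Projectivization.map_mk _ (semilinearAux_injective F σ g) v hv⟩

/-! ### The permutations of the line induced by `SL(2,F)` -/

/-- The action of `SL(2,F)` on the projective line, as a group homomorphism. -/
def slPerm : Matrix.SpecialLinearGroup (Fin 2) F →* Equiv.Perm (PG1 F) where
  toFun s := projSemilinear F (RingEquiv.refl F) (Matrix.SpecialLinearGroup.toGL s)
  map_one' := by
    ext p
    induction p using Projectivization.ind with
    | h v hv =>
      obtain ⟨hw, h⟩ := projSemilinear_mk F (RingEquiv.refl F)
        (Matrix.SpecialLinearGroup.toGL (1 : Matrix.SpecialLinearGroup (Fin 2) F)) v hv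
      rw [h]
      simp
  map_mul' s t := by
    ext p
    induction p using Projectivization.ind with
    | h v hv =>
      obtain ⟨hw, h⟩ := projSemilinear_mk F (RingEquiv.refl F)
        (Matrix.SpecialLinearGroup.toGL (s * t)) v hv
      obtain ⟨hw1, h1⟩ := projSemilinear_mk F (RingEquiv.refl F)
        (Matrix.SpecialLinearGroup.toGL t) v hv
      obtain ⟨hw2, h2⟩ := projSemilinear_mk F (RingEquiv.refl F)
        (Matrix.SpecialLinearGroup.toGL s) _ hw1
      rw [Equiv.Perm.mul_apply, h, h1, h2, Projectivization.mk_eq_mk_iff']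
      refine ⟨1, ?_⟩
      rw [one_smul]
      exact Matrix.mulVec_mulVec v (s : Matrix (Fin 2) (Fin 2) F) (t : Matrix (Fin 2) (Fin 2) F)

lemma slPerm_mk (s : Matrix.SpecialLinearGroup (Fin 2) F) (v : Fin 2 → F) (hv : v ≠ 0) :
    ∃ hw, slPerm F s (Projectivization.mk F v hv) =
      Projectivization.mk F ((s : Matrix (Fin 2) (Fin 2) F).mulVec v) hw :=
  projSemilinear_mk F (RingEquiv.refl F) (Matrix.SpecialLinearGroup.toGL s) v hv

lemma slPerm_range : (slPerm F).range = PSLsub F := by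
  unfold PSLsub
  have : {e | ∃ s : Matrix.SpecialLinearGroup (Fin 2) F,
    e = projSemilinear F (RingEquiv.refl F) (Matrix.SpecialLinearGroup.toGL s)} =
      ((slPerm F).range : Set (Equiv.Perm (PG1 F))) := by
    ext e
    constructor
    · rintro ⟨s, rfl⟩; exact ⟨s, rfl⟩
    · rintro ⟨s, rfl⟩; exact ⟨s, rfl⟩
  rw [this, Subgroup.closure_eq]

lemma slPerm_mem (s : Matrix.SpecialLinearGroup (Fin 2) F) : slPerm F s ∈ PSLsub F := by
  rw [← slPerm_range]; exact ⟨s, rfl⟩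

lemma slPerm_inf_of_zero (s : Matrix.SpecialLinearGroup (Fin 2) F) (h : s 1 0 = 0) :
    slPerm F s (ptInf F) = ptInf F := by
  obtain ⟨hw, e⟩ := slPerm_mk F s ![1, 0] (fun h => one_ne_zero (congrFun h 0))
  rw [ptInf, e]
  apply mk_eq_inf
  simp [Matrix.mulVec, dotProduct, Fin.sum_univ_two, h]

lemma slPerm_inf_of_ne (s : Matrix.SpecialLinearGroup (Fin 2) F) (h : s 1 0 ≠ 0) :
    slPerm F s (ptInf F) = ptx F (s 0 0 / s 1 0) := by
  obtain ⟨hw, e⟩ := slPerm_mk F s ![1, 0] (fun h => one_ne_zero (congrFun h 0))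
  rw [ptInf, e, mk_eq_ptx]
  · simp [Matrix.mulVec, dotProduct, Fin.sum_univ_two]
  · simpa [Matrix.mulVec, dotProduct, Fin.sum_univ_two] using h

lemma slPerm_ptx_of_zero (s : Matrix.SpecialLinearGroup (Fin 2) F) (x : F)
    (h : s 1 0 * x + s 1 1 = 0) : slPerm F s (ptx F x) = ptInf F := by
  obtain ⟨hw, e⟩ := slPerm_mk F s ![x, 1] (fun h => one_ne_zero (congrFun h 1))
  rw [ptx, e]
  apply mk_eq_inf
  simpa [Matrix.mulVec, dotProduct, Fin.sum_univ_two] using h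

lemma slPerm_ptx_of_ne (s : Matrix.SpecialLinearGroup (Fin 2) F) (x : F)
    (h : s 1 0 * x + s 1 1 ≠ 0) :
    slPerm F s (ptx F x) = ptx F ((s 0 0 * x + s 0 1) / (s 1 0 * x + s 1 1)) := by
  obtain ⟨hw, e⟩ := slPerm_mk F s ![x, 1] (fun h => one_ne_zero (congrFun h 1))
  conv_lhs => rw [ptx, e]
  rw [mk_eq_ptx]
  · simp [Matrix.mulVec, dotProduct, Fin.sum_univ_two]
  · simpa [Matrix.mulVec, dotProduct, Fin.sum_univ_two] using h

/-- The translation `x ↦ x + t`. -/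
def transU (t : F) : Equiv.Perm (PG1 F) :=
  slPerm F ⟨!![1, t; 0, 1], by simp [Matrix.det_fin_two]⟩

/-- The homothety `x ↦ a² x`, induced by `diag(a, a⁻¹)`. -/
def diagD (a : Fˣ) : Equiv.Perm (PG1 F) :=
  slPerm F ⟨!![(a : F), 0; 0, ((a⁻¹ : Fˣ) : F)], by simp [Matrix.det_fin_two]⟩

/-- The inversion `x ↦ -1/x`. -/
def weyl : Equiv.Perm (PG1 F) :=
  slPerm F ⟨!![0, 1; -1, 0], by simp [Matrix.det_fin_two]⟩

lemma transU_mem (t : F) : transU F t ∈ PSLsub F := slPerm_mem F _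
lemma diagD_mem (a : Fˣ) : diagD F a ∈ PSLsub F := slPerm_mem F _
lemma weyl_mem : weyl F ∈ PSLsub F := slPerm_mem F _

@[simp] lemma transU_inf (t : F) : transU F t (ptInf F) = ptInf F :=
  slPerm_inf_of_zero F _ (by simp)

@[simp] lemma transU_ptx (t x : F) : transU F t (ptx F x) = ptx F (x + t) := by
  refine (slPerm_ptx_of_ne F _ _ (by simp)).trans ?_
  simp

@[simp] lemma diagD_inf (a : Fˣ) : diagD F a (ptInf F) = ptInf F :=
  slPerm_inf_of_zero F _ (by simp)

@[simp] lemma diagD_ptx (a : Fˣ) (x : F) : diagD F a (ptx F x) = ptx F ((a : F) ^ 2 * x) := by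
  refine (slPerm_ptx_of_ne F _ _ (by simp)).trans ?_
  congr 1
  simp
  ring

lemma weyl_zero : weyl F (ptx F 0) = ptInf F :=
  slPerm_ptx_of_zero F _ _ (by simp)

lemma diagD_pow (a : Fˣ) (n : ℕ) : diagD F a ^ n = diagD F (a ^ n) := by
  induction n with
  | zero =>
    apply perm_ext <;> simp
  | succ n ih =>
    rw [pow_succ, ih]
    apply perm_ext
    · simp
    · intro x; simp only [Equiv.Perm.mul_apply, diagD_ptx]
      congr 1; push_cast; ring

/-- An element of `PSL(2,F)` fixing infinity is an affine map with square leading coefficient. -/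
lemma PSL_fix_inf {g : Equiv.Perm (PG1 F)} (hg : g ∈ PSLsub F) (h : g (ptInf F) = ptInf F) :
    ∃ (a : Fˣ) (b : F), ∀ x, g (ptx F x) = ptx F ((a : F) ^ 2 * x + b) := by
  rw [← slPerm_range] at hg
  obtain ⟨s, rfl⟩ := hg
  have hc : s 1 0 = 0 := by
    by_contra hc
    rw [slPerm_inf_of_ne F s hc] at h
    exact ptx_ne_inf F _ h
  have hdet : s 0 0 * s 1 1 = 1 := by
    have := s.det_coe
    rw [Matrix.det_fin_two, hc, mul_zero, sub_zero] at this
    exact this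
  have h11 : s 1 1 ≠ 0 := right_ne_zero_of_mul_eq_one hdet
  refine ⟨⟨s 0 0, s 1 1, hdet, by rw [mul_comm]; exact hdet⟩, s 0 1 * s 0 0, fun x => ?_⟩
  rw [slPerm_ptx_of_ne F s x (by simpa [hc] using h11)]
  congr 1
  rw [hc, zero_mul, zero_add, div_eq_iff h11]
  simp only
  linear_combination (-(s 0 0 * x) - s 0 1) * hdet

lemma PSL_fix_two {g : Equiv.Perm (PG1 F)} (hg : g ∈ PSLsub F) (h : g (ptInf F) = ptInf F)
    (h0 : g (ptx F 0) = ptx F 0) : ∃ a : Fˣ, g = diagD F a := by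
  obtain ⟨a, b, hab⟩ := PSL_fix_inf F hg h
  refine ⟨a, perm_ext F (by simp [h]) fun x => ?_⟩
  have := ptx_injective F ((hab 0).symm.trans h0)
  rw [hab, diagD_ptx]
  congr 1
  linear_combination this

lemma PSL_trans (x : PG1 F) : ∃ g ∈ PSLsub F, g x = ptInf F := by
  rcases pt_cases F x with rfl | ⟨t, rfl⟩
  · exact ⟨1, one_mem _, rfl⟩
  · exact ⟨weyl F * transU F (-t), mul_mem (weyl_mem F) (transU_mem F _), by
      simp [Equiv.Perm.mul_apply, weyl_zero]⟩

lemma PSL_two_trans (x y : PG1 F) (hxy : x ≠ y) :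
    ∃ g ∈ PSLsub F, g x = ptInf F ∧ g y = ptx F 0 := by
  obtain ⟨g, hg, hx⟩ := PSL_trans F x
  rcases pt_cases F (g y) with h | ⟨u, hu⟩
  · exact absurd (g.injective (hx.trans h.symm)) hxy
  · exact ⟨transU F (-u) * g, mul_mem (transU_mem F _) hg, by simp [hx], by simp [hu]⟩

/-- `SL(2,F)` modulo its center acts faithfully on the line, so `PSL2 F` is `PSLsub F`. -/
lemma slPerm_ker : (slPerm F).ker = Subgroup.center (Matrix.SpecialLinearGroup (Fin 2) F) := by
  ext s
  rw [MonoidHom.mem_ker, Matrix.SpecialLinearGroup.mem_center_iff]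
  constructor
  · intro h
    have hc : s 1 0 = 0 := by
      by_contra hc
      have := slPerm_inf_of_ne F s hc
      rw [h] at this
      exact ptx_ne_inf F _ this.symm
    have hdet : s 0 0 * s 1 1 = 1 := by
      have := s.det_coe
      rw [Matrix.det_fin_two, hc, mul_zero, sub_zero] at this
      exact this
    have h11 : s 1 1 ≠ 0 := right_ne_zero_of_mul_eq_one hdet
    have key : ∀ x, x = (s 0 0 * x + s 0 1) / s 1 1 := fun x => by
      have := slPerm_ptx_of_ne F s x (by simpa [hc] using h11)
      rw [h, hc, zero_mul, zero_add] at this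
      exact ptx_injective F this
    have hb : s 0 1 = 0 := by
      have := key 0
      rw [eq_div_iff h11] at this
      linear_combination -this
    have had : s 0 0 = s 1 1 := by
      have := key 1
      rw [eq_div_iff h11, hb] at this
      linear_combination -this
    refine ⟨s 0 0, ?_, ?_⟩
    · rw [Fintype.card_fin, sq]; nth_rw 2 [had]; exact hdet
    · ext i j
      fin_cases i <;> fin_cases j <;> simp [hb, hc, had]
  · rintro ⟨r, hr, hs⟩
    have hr0 : r ≠ 0 := by rintro rfl; simp at hr
    have e00 : s 0 0 = r := by rw [← hs]; simp
    have e01 : s 0 1 = 0 := by rw [← hs]; simp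
    have e10 : s 1 0 = 0 := by rw [← hs]; simp
    have e11 : s 1 1 = r := by rw [← hs]; simp
    apply perm_ext
    · rw [slPerm_inf_of_zero F s e10]; rfl
    · intro x
      rw [slPerm_ptx_of_ne F s x (by simpa [e10, e11] using hr0), e00, e01, e10, e11]
      simp [hr0]

/-- The isomorphism between the abstract group `PSL(2,F)` and the permutation group. -/
noncomputable def pslEquiv : PSL2 F ≃* PSLsub F :=
  ((QuotientGroup.quotientMulEquivOfEq (slPerm_ker F).symm).trans
    (QuotientGroup.quotientKerEquivRange (slPerm F))).trans
    (MulEquiv.subgroupCongr (slPerm_range F))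

end Coordinates

/-! ### Identifying the action on points with the action on the line -/

section Identification

variable (F : Type) [Field F]

lemma perm_inv_apply_self {P : Type*} (g : Equiv.Perm P) (x : P) : g⁻¹ (g x) = x :=
  g.symm_apply_apply x

lemma transU_add (s t : F) : transU F (s + t) = transU F s * transU F t := by
  apply perm_ext
  · simp
  · intro x
    simp only [Equiv.Perm.mul_apply, transU_ptx]
    congr 1; ring

lemma transU_zero : transU F 0 = 1 := by
  apply perm_ext <;> simp

lemma transU_nsmul (t : F) (n : ℕ) : transU F t ^ n = transU F (n * t) := by
  induction n with
  | zero => simp [transU_zero]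
  | succ n ih => rw [pow_succ, ih, ← transU_add]; congr 1; push_cast; ring

/-- A `p`-element of `PSL(2,F)`, with `p` the characteristic, fixing two points is trivial. -/
lemma PSL_unipotent_fix {p : ℕ} [Fact p.Prime] [CharP F p] {g : Equiv.Perm (PG1 F)}
    (hg : g ∈ PSLsub F) {j : ℕ} (hj : g ^ p ^ j = 1) {x y : PG1 F} (hxy : x ≠ y)
    (hx : g x = x) (hy : g y = y) : g = 1 := by
  obtain ⟨h, hh, h1, h2⟩ := PSL_two_trans F x y hxy
  obtain ⟨a, ha⟩ := PSL_fix_two F (g := h * g * h⁻¹)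
    (mul_mem (mul_mem hh hg) (inv_mem hh))
    (by simp only [Equiv.Perm.mul_apply]; rw [← h1, perm_inv_apply_self, hx])
    (by simp only [Equiv.Perm.mul_apply]; rw [← h2, perm_inv_apply_self, hy])
  have hpow : diagD F (a ^ p ^ j) = 1 := by
    rw [← diagD_pow, ← ha, conj_pow, hj, mul_one, mul_inv_cancel]
  have h3 : ((a : F) ^ 2) ^ p ^ j = 1 ^ p ^ j := by
    have := congrArg (fun e : Equiv.Perm (PG1 F) => e (ptx F 1)) hpow
    simp only [diagD_ptx, Equiv.Perm.one_apply] at this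
    have := ptx_injective F this
    push_cast at this
    rw [one_pow, ← this]; ring
  have h4 : (a : F) ^ 2 = 1 := iterateFrobenius_inj F p j h3
  have h5 : diagD F a = 1 := perm_ext F (by simp) fun x => by simp [h4]
  rw [h5] at ha
  have := mul_inv_eq_one.mp ha
  exact mul_eq_left.mp this

/-- A maximal subgroup of `PSL(2,F)` isomorphic to a point stabilizer is a point stabilizer:
the image of the translation group is a `p`-group, hence fixes a point, and this point is unique,
so it is fixed by the normalizer. -/
lemma exists_point_of_borel [Finite F] (H : Subgroup (PSLsub F)) (hH : IsCoatom H) (p₀ : PG1 F)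
    (ε : H ≃* MulAction.stabilizer (PSLsub F) p₀) :
    ∃ p₁ : PG1 F, H = MulAction.stabilizer (PSLsub F) p₁ := by
  classical
  obtain ⟨p, hp⟩ := CharP.exists F
  have : Fact p.Prime := ⟨CharP.char_is_prime F p⟩
  obtain ⟨g₀, hg₀, hg₀p⟩ := PSL_trans F p₀
  -- the image in `H` of the translation by `t` relative to the point `p₀`
  have hτ : ∀ t : F, (⟨g₀⁻¹ * transU F t * g₀, mul_mem (mul_mem (inv_mem hg₀) (transU_mem F t)) hg₀⟩
      : PSLsub F) ∈ MulAction.stabilizer (PSLsub F) p₀ := by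
    intro t
    rw [MulAction.mem_stabilizer_iff]
    change (g₀⁻¹ * transU F t * g₀) p₀ = p₀
    simp only [Equiv.Perm.mul_apply, hg₀p, transU_inf]
    rw [← hg₀p, perm_inv_apply_self]
  let τ : F → H := fun t => ε.symm ⟨_, hτ t⟩
  have hτadd : ∀ s t, τ (s + t) = τ s * τ t := by
    intro s t
    simp only [τ]
    rw [← map_mul]
    congr 1
    ext1; ext1
    simp only [Subgroup.coe_mul, transU_add]
    group
  have hτ0 : τ 0 = 1 := by
    have := hτadd 0 0
    rw [add_zero] at this
    exact left_eq_mul.mp this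
  have hτne : τ 1 ≠ 1 := by
    intro h
    have h1 : (⟨_, hτ 1⟩ : MulAction.stabilizer (PSLsub F) p₀) = 1 := by
      apply ε.symm.injective; rw [map_one]; exact h
    have h2 : g₀⁻¹ * transU F 1 * g₀ = 1 := congrArg (fun z => ((z.1 : PSLsub F) : Equiv.Perm (PG1 F))) h1
    have h3 : transU F 1 = 1 := by
      have : transU F 1 = g₀ * (g₀⁻¹ * transU F 1 * g₀) * g₀⁻¹ := by group
      rw [this, h2]; group
    have h4 := congrArg (fun e : Equiv.Perm (PG1 F) => e (ptx F 0)) h3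
    simp only [transU_ptx, Equiv.Perm.one_apply, zero_add] at h4
    exact one_ne_zero (ptx_injective F h4)
  have hτp : ∀ t, τ t ^ p = 1 := by
    intro t
    have h1 : ∀ n : ℕ, τ t ^ n = τ (n * t) := by
      intro n
      induction n with
      | zero => simp [hτ0]
      | succ n ih => rw [pow_succ, ih, ← hτadd]; congr 1; push_cast; ring
    rw [h1, CharP.cast_eq_zero, zero_mul, hτ0]
  have hconj : ∀ (h : H) (t : F), ∃ t', h * τ t * h⁻¹ = τ t' := by
    intro h t
    have hs := (ε h).2
    rw [MulAction.mem_stabilizer_iff] at hs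
    set y : Equiv.Perm (PG1 F) := ((ε h : MulAction.stabilizer (PSLsub F) p₀).1 : Equiv.Perm (PG1 F)) with hy
    have hyp : y p₀ = p₀ := hs
    have hymem : y ∈ PSLsub F := ((ε h).1).2
    obtain ⟨a, b, hab⟩ := PSL_fix_inf F (g := g₀ * y * g₀⁻¹)
      (mul_mem (mul_mem hg₀ hymem) (inv_mem hg₀))
      (by simp only [Equiv.Perm.mul_apply]; rw [← hg₀p, perm_inv_apply_self, hyp])
    have hinf : (g₀ * y * g₀⁻¹) (ptInf F) = ptInf F := by
      simp only [Equiv.Perm.mul_apply]; rw [← hg₀p, perm_inv_apply_self, hyp]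
    refine ⟨(a : F) ^ 2 * t, ?_⟩
    have key : (g₀ * y * g₀⁻¹) * transU F t = transU F ((a : F) ^ 2 * t) * (g₀ * y * g₀⁻¹) := by
      apply perm_ext
      · rw [Equiv.Perm.mul_apply _ (transU F t), Equiv.Perm.mul_apply (transU F _), transU_inf,
          hinf, transU_inf]
      · intro x
        rw [Equiv.Perm.mul_apply _ (transU F t), Equiv.Perm.mul_apply (transU F _), transU_ptx,
          hab, hab, transU_ptx]
        congr 1; ring
    apply ε.injective
    rw [map_mul, map_mul, map_inv]
    simp only [τ, MulEquiv.apply_symm_apply]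
    rw [mul_inv_eq_iff_eq_mul]
    ext1; ext1
    change y * (g₀⁻¹ * transU F t * g₀) = (g₀⁻¹ * transU F ((a : F) ^ 2 * t) * g₀) * y
    calc y * (g₀⁻¹ * transU F t * g₀) = g₀⁻¹ * ((g₀ * y * g₀⁻¹) * transU F t) * g₀ := by group
      _ = _ := by rw [key]; group
  -- the translations in `H`, as a group of permutations of the line
  let N : Subgroup (Equiv.Perm (PG1 F)) :=
    { carrier := {e | ∃ t, e = ((τ t : PSLsub F) : Equiv.Perm (PG1 F))}
      mul_mem' := by
        rintro _ _ ⟨s, rfl⟩ ⟨t, rfl⟩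
        exact ⟨s + t, by rw [hτadd]; rfl⟩
      one_mem' := ⟨0, by rw [hτ0]; rfl⟩
      inv_mem' := by
        rintro _ ⟨s, rfl⟩
        refine ⟨-s, ?_⟩
        have : τ (-s) = (τ s)⁻¹ := by
          rw [eq_inv_iff_mul_eq_one, ← hτadd, neg_add_cancel, hτ0]
        rw [this]; rfl }
  have hNp : IsPGroup p N := by
    rintro ⟨_, t, rfl⟩
    refine ⟨1, ?_⟩
    ext1
    have := congrArg (fun z : H => ((z : PSLsub F) : Equiv.Perm (PG1 F))) (hτp t)
    rw [pow_one]
    exact this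
  have : Finite (PG1 F) := Finite.of_surjective (fun o : Option F => o.elim (ptInf F) (ptx F)) (by
    intro z
    rcases pt_cases F z with rfl | ⟨x, rfl⟩
    · exact ⟨none, rfl⟩
    · exact ⟨some x, rfl⟩)
  have hcard : Nat.card (PG1 F) = Nat.card F + 1 :=
    Projectivization.card_of_finrank_two (k := F) (V := Fin 2 → F) (by simp)
  have hpdvd : p ∣ Nat.card F := by
    have := Fintype.ofFinite F
    obtain ⟨n, _, hn⟩ := FiniteField.card F p
    rw [Nat.card_eq_fintype_card, hn]
    exact dvd_pow_self p n.ne_zero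
  have hmod := hNp.card_modEq_card_fixedPoints (PG1 F)
  have hne : (MulAction.fixedPoints N (PG1 F)).Nonempty := by
    by_contra hcon
    rw [Set.not_nonempty_iff_eq_empty] at hcon
    rw [hcon, hcard] at hmod
    have h1 : p ∣ Nat.card F + 1 := by
      rw [← Nat.modEq_zero_iff_dvd]
      simpa using hmod
    have h2 : p ∣ 1 := (Nat.dvd_add_right hpdvd).mp h1
    exact (Fact.out : p.Prime).one_lt.ne' (Nat.dvd_one.mp h2)
  obtain ⟨p₁, hp₁⟩ := hne
  have hfix : ∀ t, ((τ t : PSLsub F) : Equiv.Perm (PG1 F)) p₁ = p₁ := fun t =>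
    hp₁ ⟨_, t, rfl⟩
  have hle : H ≤ MulAction.stabilizer (PSLsub F) p₁ := by
    intro h hh
    rw [MulAction.mem_stabilizer_iff]
    change (h : Equiv.Perm (PG1 F)) p₁ = p₁
    by_contra hcon
    obtain ⟨t', ht'⟩ := hconj (⟨h, hh⟩⁻¹) 1
    have h1 : ((τ 1 : PSLsub F) : Equiv.Perm (PG1 F)) * (h : Equiv.Perm (PG1 F)) =
        (h : Equiv.Perm (PG1 F)) * ((τ t' : PSLsub F) : Equiv.Perm (PG1 F)) := by
      have : τ 1 * ⟨h, hh⟩ = ⟨h, hh⟩ * τ t' := by rw [← ht']; group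
      exact congrArg (fun z : H => ((z : PSLsub F) : Equiv.Perm (PG1 F))) this
    have h2 : ((τ 1 : PSLsub F) : Equiv.Perm (PG1 F)) ((h : Equiv.Perm (PG1 F)) p₁) =
        (h : Equiv.Perm (PG1 F)) p₁ := by
      rw [← Equiv.Perm.mul_apply, h1, Equiv.Perm.mul_apply, hfix]
    have h3 : ((τ 1 : PSLsub F) : Equiv.Perm (PG1 F)) = 1 :=
      PSL_unipotent_fix F (p := p) (j := 1) (τ 1).1.2 (by
        rw [pow_one]
        exact congrArg (fun z : H => ((z : PSLsub F) : Equiv.Perm (PG1 F))) (hτp 1)) hcon h2 (hfix 1)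
    exact hτne (by ext1; ext1; exact h3)
  refine ⟨p₁, ?_⟩
  rcases hle.eq_or_lt with h | h
  · exact h
  · exfalso
    have htop := hH.2 _ h
    have hall : ∀ g ∈ PSLsub F, g p₁ = p₁ := by
      intro g hg
      have : (⟨g, hg⟩ : PSLsub F) ∈ MulAction.stabilizer (PSLsub F) p₁ := by rw [htop]; trivial
      exact this
    obtain ⟨g, hg, hgp⟩ := PSL_trans F p₁
    have hpinf : p₁ = ptInf F := by rw [← hgp, hall g hg]
    have := hall _ (weyl_mem F)
    rw [hpinf, ← weyl_zero, Equiv.apply_eq_iff_eq, weyl_zero] at this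
    exact ptx_ne_inf F 0 this.symm

end Identification

/-! ### Parameters -/

section Parameters

/-- Double counting of flags: `b k = v r`. -/
lemma design_flag_count {P : Type*} [Finite P] (𝓑 : Set (Set P)) (k r : ℕ)
    (hk : ∀ B ∈ 𝓑, Nat.card B = k) (hr : ∀ x : P, repNum 𝓑 x = r) :
    Nat.card 𝓑 * k = Nat.card P * r := by
  classical
  have := Fintype.ofFinite P
  have h := Finset.sum_card_bipartiteAbove_eq_sum_card_bipartiteBelow
    (s := (Finset.univ : Finset P)) (t := 𝓑.toFinset) (fun x B => x ∈ B)
  have h1 : ∀ x ∈ (Finset.univ : Finset P),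
      (Finset.bipartiteAbove (fun x B => x ∈ B) 𝓑.toFinset x).card = r := by
    intro x _
    rw [← hr x, repNum, Nat.card_eq_card_toFinset]
    congr 1
    ext B; simp
  have h2 : ∀ B ∈ 𝓑.toFinset,
      (Finset.bipartiteBelow (fun x B => x ∈ B) (Finset.univ : Finset P) B).card = k := by
    intro B hB
    rw [← hk B (by simpa using hB), Nat.card_eq_card_toFinset]
    congr 1
    ext B; simp
  rw [Finset.sum_const_nat h1, Finset.sum_const_nat h2] at h
  rw [Nat.card_eq_card_toFinset, Nat.card_eq_fintype_card, ← h, Finset.card_univ]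

/-- Double counting of pairs through a point: `r (k - 1) = λ (v - 1)`. -/
lemma design_pair_count {P : Type*} [Finite P] (𝓑 : Set (Set P)) (k r lam : ℕ)
    (hD : IsDesign 𝓑 k lam) (x : P) (hr : repNum 𝓑 x = r) :
    r * (k - 1) = (Nat.card P - 1) * lam := by
  classical
  have := Fintype.ofFinite P
  have h := Finset.sum_card_bipartiteAbove_eq_sum_card_bipartiteBelow
    (s := Finset.univ.erase x) (t := {B | B ∈ 𝓑 ∧ x ∈ B}.toFinset) (fun x B => x ∈ B)
  have h1 : ∀ y ∈ Finset.univ.erase x,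
      (Finset.bipartiteAbove (fun x B => x ∈ B) {B | B ∈ 𝓑 ∧ x ∈ B}.toFinset y).card = lam := by
    intro y hy
    have hy' : x ≠ y := by simpa [eq_comm] using hy
    rw [← hD.pair_count x y hy', Nat.card_eq_card_toFinset]
    congr 1
    ext B; simp; tauto
  have h2 : ∀ B ∈ {B | B ∈ 𝓑 ∧ x ∈ B}.toFinset,
      (Finset.bipartiteBelow (fun x B => x ∈ B) (Finset.univ.erase x) B).card = k - 1 := by
    intro B hB
    have hB' : B ∈ 𝓑 ∧ x ∈ B := by simpa using hB
    rw [← hD.block_card B hB'.1, Nat.card_eq_card_toFinset,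
      ← Finset.card_erase_of_mem (a := x) (by simpa using hB'.2)]
    congr 1
    ext y; simp
  rw [Finset.sum_const_nat h1, Finset.sum_const_nat h2, Finset.card_erase_of_mem
    (Finset.mem_univ _), Finset.card_univ] at h
  rw [← hr, repNum, Nat.card_eq_card_toFinset, ← h, Nat.card_eq_fintype_card]

/-- The arithmetic of the parameters: with `k - 1` a power of `p` dividing `q`, the condition
that `(q - 1) / gcd(q - 1, 2e)` divides `k - 2` leaves only `q = 4` (excluded here), `q = 9`
(where `k ∤ v r`) and `q = 25`. -/
lemma parameter_arith (p f q k r b e : ℕ) (hp : p.Prime) (hq : q = p ^ f) (hq5 : 5 ≤ q)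
    (hk : 2 < k) (hkq : k < q) (h3 : 3 ∣ r) (hrk : r * (k - 1) = q * 3)
    (hbk : b * k = (q + 1) * r) (he : e = 1 ∨ e = 2 ∨ e = 3)
    (hdvd : (q - 1) ∣ Nat.gcd (q - 1) (2 * e) * (k - 2)) : q = 25 ∧ k = 6 ∧ e = 3 := by
  obtain ⟨s, rfl⟩ := h3
  have hsk : s * (k - 1) = q := by
    have : 3 * (s * (k - 1)) = 3 * q := by rw [← mul_assoc, hrk, mul_comm]
    omega
  obtain ⟨u, rfl⟩ : ∃ u, k = u + 1 := ⟨k - 1, by omega⟩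
  simp only [Nat.add_sub_cancel] at hsk
  have hu2 : 2 ≤ u := by omega
  obtain ⟨n, hn, hs⟩ := (Nat.dvd_prime_pow hp).mp (show s ∣ p ^ f from ⟨u, by rw [← hq, hsk]⟩)
  have hs2 : 2 ≤ s := by
    by_contra hcon
    interval_cases s <;> omega
  have hn0 : n ≠ 0 := by rintro rfl; simp at hs; omega
  have hps : p ∣ s := by rw [hs]; exact dvd_pow_self p hn0
  set c := Nat.gcd (q - 1) (2 * e) with hc
  have hc1 : c ∣ q - 1 := Nat.gcd_dvd_left _ _
  have hc2 : c ∣ 2 * e := Nat.gcd_dvd_right _ _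
  have hc6 : c ≤ 2 * e := Nat.le_of_dvd (by omega) hc2
  have hc0 : 0 < c := Nat.pos_of_dvd_of_pos hc1 (by omega)
  obtain ⟨j, hj⟩ := hdvd
  have hu1 : u + 1 - 2 = u - 1 := by omega
  rw [hu1] at hj
  obtain ⟨t, rfl⟩ : ∃ t, u = t + 1 := ⟨u - 1, by omega⟩
  simp only [Nat.add_sub_cancel] at hj
  have hqt : q - 1 = s * t + (s - 1) := by rw [← hsk, mul_add]; omega
  have hj0 : 0 < j := by
    rcases Nat.eq_zero_or_pos j with rfl | h
    · have : 0 < c * t := Nat.mul_pos hc0 (by omega)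
      omega
    · exact h
  have hsc : s < c := by
    by_contra hcon
    have h1 : c * t ≤ s * t := Nat.mul_le_mul_right t (by omega)
    have h2 : q - 1 ≤ (q - 1) * j := Nat.le_mul_of_pos_right _ hj0
    omega
  have hj5 : j ≤ 5 := by
    by_contra hcon
    have h1 : (q - 1) * 6 ≤ (q - 1) * j := Nat.mul_le_mul_left _ (by omega)
    have h2 : c * t ≤ 6 * t := Nat.mul_le_mul_right t (by omega)
    have h3 : 2 * t ≤ s * t := Nat.mul_le_mul_right t hs2
    omega
  have hs5 : s ≤ 5 := by omega
  -- if `s` is even then so is `q`, and `c` is odd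
  have hev : 2 ∣ s → ¬ 2 ∣ c := by
    intro h2 h2c
    have : 2 ∣ q := by rw [← hsk]; exact Dvd.dvd.mul_right h2 _
    have h2' := h2c.trans hc1
    omega
  clear_value c
  rw [hqt] at hj
  -- `t = 2` is the case `q = 9`, ruled out by `b k = v r`
  interval_cases s <;> interval_cases j <;> rcases he with rfl | rfl | rfl <;>
    interval_cases c <;> first | omega | (obtain rfl : t = 2 := by omega
                                          omega)

/-- The cycle types of a permutation of three letters; in the third case it is transitive. -/
lemma perm_three (f : Fin 3 → Fin 3) (hf : Function.Injective f) :
    (∀ i, f i = i) ∨ (∀ i, f (f i) = i) ∨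
      ((∀ i, f (f (f i)) = i) ∧ ∀ i j, j = i ∨ j = f i ∨ j = f (f i)) := by
  revert f; decide

end Parameters

/-! ### Permutations normalizing `PSL(2,F)` -/

section Normalizer

variable (F : Type) [Field F]

/-- In odd characteristic, a permutation of the line normalizing `PSL(2,F)` and fixing `0` and
`∞` has the form `x ↦ a σ(x)` with `σ` a field automorphism. -/
lemma normalizer_fix_two (h2 : (2 : F) ≠ 0) (g : Equiv.Perm (PG1 F))
    (hg : ∀ n ∈ PSLsub F, g * n * g⁻¹ ∈ PSLsub F)
    (hinf : g (ptInf F) = ptInf F) (h0 : g (ptx F 0) = ptx F 0) :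
    ∃ (a : F) (σ : F ≃+* F), a ≠ 0 ∧ ∀ x, g (ptx F x) = ptx F (a * σ x) := by
  have hex : ∀ x, ∃ y, g (ptx F x) = ptx F y := by
    intro x
    rcases pt_cases F (g (ptx F x)) with h | h
    · exact absurd (g.injective (h.trans hinf.symm)) (ptx_ne_inf F x)
    · exact h
  choose h hh using hex
  have hsurj : Function.Surjective h := by
    intro y
    rcases pt_cases F (g.symm (ptx F y)) with e | ⟨x, e⟩
    · rw [Equiv.symm_apply_eq, hinf] at e
      exact absurd e (ptx_ne_inf F y)
    · rw [Equiv.symm_apply_eq, hh] at e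
      exact ⟨x, (ptx_injective F e).symm⟩
  have hinj : Function.Injective h := by
    intro x y e
    apply ptx_injective F
    apply g.injective
    rw [hh, hh, e]
  have hh0 : h 0 = 0 := ptx_injective F ((hh 0).symm.trans h0)
  have hginf : g⁻¹ (ptInf F) = ptInf F := by
    conv_lhs => rw [← hinf]
    exact perm_inv_apply_self g _
  have hg0 : g⁻¹ (ptx F 0) = ptx F 0 := by
    conv_lhs => rw [← h0]
    exact perm_inv_apply_self g _
  have hadd : ∀ x t, h (x + t) = h x + h t := by
    intro x t
    by_cases ht : t = 0
    · simp [ht, hh0]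
    obtain ⟨a, b, hab⟩ := PSL_fix_inf F (hg _ (transU_mem F t))
      (by rw [Equiv.Perm.mul_apply, Equiv.Perm.mul_apply, hginf, transU_inf, hinf])
    have hconj : ∀ x, h (x + t) = (a : F) ^ 2 * h x + b := by
      intro x
      apply ptx_injective F
      rw [← hab, ← hh, ← hh, Equiv.Perm.mul_apply, Equiv.Perm.mul_apply,
        perm_inv_apply_self, transU_ptx]
    -- a leading coefficient other than `1` would produce an affine fixed point
    have ha : (a : F) ^ 2 = 1 := by
      by_contra hne
      have hne' : 1 - (a : F) ^ 2 ≠ 0 := sub_ne_zero.mpr (Ne.symm hne)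
      obtain ⟨z, hz⟩ := hsurj (b / (1 - (a : F) ^ 2))
      have h1 : h (z + t) = h z := by
        rw [hconj, hz]; field_simp; ring
      exact ht (by simpa using hinj h1)
    have hb : h t = b := by
      have := hconj 0
      rwa [zero_add, hh0, mul_zero, zero_add] at this
    rw [hconj, ha, one_mul, hb]
  have hsq : ∀ a x : F, h (a ^ 2 * x) * h 1 = h (a ^ 2) * h x := by
    intro a x
    by_cases ha : a = 0
    · simp [ha, hh0]
    obtain ⟨c, hc⟩ := PSL_fix_two F (hg _ (diagD_mem F (Units.mk0 a ha)))
      (by rw [Equiv.Perm.mul_apply, Equiv.Perm.mul_apply, hginf, diagD_inf, hinf])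
      (by rw [Equiv.Perm.mul_apply, Equiv.Perm.mul_apply, hg0, diagD_ptx, mul_zero, h0])
    have hconj : ∀ x, h (a ^ 2 * x) = (c : F) ^ 2 * h x := by
      intro x
      apply ptx_injective F
      rw [← diagD_ptx, ← hc, ← hh, ← hh, Equiv.Perm.mul_apply, Equiv.Perm.mul_apply,
        perm_inv_apply_self, diagD_ptx, Units.val_mk0]
    have := hconj 1
    rw [mul_one] at this
    rw [hconj, this]; ring
  have hneg : ∀ x, h (-x) = - h x := by
    intro x
    have := hadd x (-x)
    rw [add_neg_cancel, hh0] at this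
    linear_combination -this
  -- every element is a difference of two squares
  have hmul : ∀ x y : F, h (x * y) * h 1 = h x * h y := by
    intro x y
    have hx : x = ((x + 1) / 2) ^ 2 + -(((x - 1) / 2) ^ 2) := by field_simp; ring
    have e1 := hsq ((x + 1) / 2) y
    have e2 := hsq ((x - 1) / 2) y
    conv_lhs => rw [hx]
    conv_rhs => rw [hx]
    rw [add_mul, hadd, hadd, neg_mul, hneg, hneg]
    linear_combination e1 - e2
  have h1 : h 1 ≠ 0 := fun e => one_ne_zero (hinj (e.trans hh0.symm))
  let σ : F ≃+* F :=
    { Equiv.ofBijective (fun x => h x / h 1) (by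
        constructor
        · intro x y e
          exact hinj ((div_left_inj' h1).mp e)
        · intro y
          obtain ⟨x, hx⟩ := hsurj (y * h 1)
          exact ⟨x, by simp only [hx]; field_simp⟩) with
      map_mul' := by
        intro x y
        change h (x * y) / h 1 = h x / h 1 * (h y / h 1)
        rw [div_mul_div_comm, ← hmul]
        field_simp
      map_add' := by
        intro x y
        change h (x + y) / h 1 = h x / h 1 + h y / h 1
        rw [hadd, add_div] }
  refine ⟨h 1, σ, h1, fun x => ?_⟩
  rw [hh]
  congr 1
  change h x = h 1 * (h x / h 1)
  field_simp

/-- The map `x ↦ d² σ(x)` belongs to `PΣL(2,F)`. -/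
lemma mem_PSigmaL_of_square (g : Equiv.Perm (PG1 F)) (σ : F ≃+* F) (d : F) (hd : d ≠ 0)
    (hinf : g (ptInf F) = ptInf F) (hg : ∀ x, g (ptx F x) = ptx F (d ^ 2 * σ x)) :
    g ∈ PSigmaLsub F := by
  apply Subgroup.subset_closure
  let s : Matrix.SpecialLinearGroup (Fin 2) F :=
    ⟨!![d, 0; 0, d⁻¹], by simp [Matrix.det_fin_two, hd]⟩
  have hs : ((Matrix.SpecialLinearGroup.toGL s : GL (Fin 2) F) : Matrix (Fin 2) (Fin 2) F) =
      !![d, 0; 0, d⁻¹] := rfl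
  refine ⟨σ, s, perm_ext F ?_ fun x => ?_⟩
  · obtain ⟨hw, e⟩ := projSemilinear_mk F σ (Matrix.SpecialLinearGroup.toGL s) ![1, 0]
      (fun h => one_ne_zero (congrFun h 0))
    rw [hinf]
    conv_rhs => rw [ptInf, e]
    rw [mk_eq_inf]
    simp [hs, Matrix.mulVec, dotProduct, Fin.sum_univ_two]
  · obtain ⟨hw, e⟩ := projSemilinear_mk F σ (Matrix.SpecialLinearGroup.toGL s) ![x, 1]
      (fun h => one_ne_zero (congrFun h 1))
    rw [hg]
    conv_rhs => rw [ptx, e]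
    rw [mk_eq_ptx]
    · congr 1
      simp [hs, Matrix.mulVec, dotProduct, Fin.sum_univ_two]
      ring
    · simp [hs, Matrix.mulVec, dotProduct, Fin.sum_univ_two, hd]

lemma PSL_le_PSigmaL : PSLsub F ≤ PSigmaLsub F := by
  apply Subgroup.closure_mono
  rintro _ ⟨s, rfl⟩
  exact ⟨RingEquiv.refl F, s, rfl⟩

end Normalizer

/-! ### Blocks on two points of the line -/

section Blocks

variable (F : Type) [Field F]

/-- The nonzero affine coordinates of the points of a set. -/
def unitsOf (B : Set (PG1 F)) : Set Fˣ := {a | ptx F (a : F) ∈ B}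

lemma finite_PG1 [Finite F] : Finite (PG1 F) :=
  Finite.of_surjective (fun o : Option F => o.elim (ptInf F) (ptx F)) (by
    intro z
    rcases pt_cases F z with rfl | ⟨x, rfl⟩
    · exact ⟨none, rfl⟩
    · exact ⟨some x, rfl⟩)

lemma eq_insert_unitsOf (B : Set (PG1 F)) (h1 : ptInf F ∈ B) (h2 : ptx F 0 ∈ B) :
    B = insert (ptInf F) (insert (ptx F 0) ((fun a : Fˣ => ptx F (a : F)) '' unitsOf F B)) := by
  ext p
  constructor
  · intro hp
    rcases pt_cases F p with rfl | ⟨x, rfl⟩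
    · exact Or.inl rfl
    · by_cases hx : x = 0
      · exact Or.inr (Or.inl (by rw [hx]))
      · exact Or.inr (Or.inr ⟨Units.mk0 x hx, hp, rfl⟩)
  · rintro (rfl | rfl | ⟨a, ha, rfl⟩)
    · exact h1
    · exact h2
    · exact ha

lemma unitsOf_card [Finite F] (B : Set (PG1 F)) (h1 : ptInf F ∈ B) (h2 : ptx F 0 ∈ B) :
    Nat.card B = Nat.card (unitsOf F B) + 2 := by
  have := finite_PG1 F
  rw [Nat.card_coe_set_eq, Nat.card_coe_set_eq]
  conv_lhs => rw [eq_insert_unitsOf F B h1 h2]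
  rw [Set.ncard_insert_of_notMem, Set.ncard_insert_of_notMem, Set.ncard_image_of_injective]
  · intro a b h
    exact Units.ext (ptx_injective F h)
  · rintro ⟨a, _, ha⟩
    exact a.ne_zero (ptx_injective F ha)
  · rintro (h | ⟨a, _, ha⟩)
    · exact ptx_ne_inf F 0 h.symm
    · exact ptx_ne_inf F _ ha

/-- A subset of a group closed under multiplication by a subgroup `M` is a union of cosets. -/
lemma card_dvd_of_saturated {A : Type*} [Group A] (M : Subgroup A) (S : Set A)
    (h : ∀ m ∈ M, ∀ a ∈ S, m * a ∈ S) : Nat.card M ∣ Nat.card S := by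
  let T : SubMulAction M A :=
    { carrier := S
      smul_mem' := fun m a ha => h m.1 m.2 a ha }
  have e := MulAction.selfEquivOrbitsQuotientProd (G := M) (X := T) (by
    intro b
    rw [eq_bot_iff]
    intro m hm
    rw [MulAction.mem_stabilizer_iff] at hm
    have h1 : (m : A) * (b : A) = b := congrArg Subtype.val hm
    rw [Subgroup.mem_bot]
    ext1
    exact mul_eq_right.mp h1)
  have := Nat.card_congr e
  rw [Nat.card_prod] at this
  exact ⟨_, (show Nat.card S = Nat.card T from rfl).trans (this.trans (mul_comm _ _))⟩

/-- The cyclic group of homotheties `x ↦ γ² x` permutes the three blocks on `0` and `∞`, so the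
`e`-th power of its generator fixes all three for some `e ≤ 3`; if `e = 3`, the three
blocks form one orbit. -/
lemma blocks_through_two (𝓑 : Set (Set (PG1 F)))
    (hcard : Nat.card {B : Set (PG1 F) | B ∈ 𝓑 ∧ ptInf F ∈ B ∧ ptx F 0 ∈ B} = 3)
    (hinv : ∀ n ∈ PSLsub F, ∀ B ∈ 𝓑, n • B ∈ 𝓑) (γ : Fˣ) :
    ∃ e : ℕ, (e = 1 ∨ e = 2 ∨ e = 3) ∧
      (∀ B ∈ 𝓑, ptInf F ∈ B → ptx F 0 ∈ B → diagD F (γ ^ e) • B = B) ∧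
      (e = 3 → ∀ B ∈ 𝓑, ptInf F ∈ B → ptx F 0 ∈ B → ∀ C ∈ 𝓑, ptInf F ∈ C → ptx F 0 ∈ C →
        ∃ n ∈ PSLsub F, n (ptInf F) = ptInf F ∧ n (ptx F 0) = ptx F 0 ∧ n • B = C) := by
  have : Finite {B : Set (PG1 F) | B ∈ 𝓑 ∧ ptInf F ∈ B ∧ ptx F 0 ∈ B} :=
    Nat.finite_of_card_ne_zero (by rw [hcard]; norm_num)
  let ε := Finite.equivFinOfCardEq hcard
  have hmem : ∀ B ∈ {B : Set (PG1 F) | B ∈ 𝓑 ∧ ptInf F ∈ B ∧ ptx F 0 ∈ B},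
      diagD F γ • B ∈ {B : Set (PG1 F) | B ∈ 𝓑 ∧ ptInf F ∈ B ∧ ptx F 0 ∈ B} := by
    rintro B ⟨h1, h2, h3⟩
    exact ⟨hinv _ (diagD_mem F γ) B h1, ⟨_, h2, diagD_inf F γ⟩,
      ⟨_, h3, (diagD_ptx F γ 0).trans (by rw [mul_zero])⟩⟩
  let f : Fin 3 → Fin 3 := fun i => ε ⟨_, hmem _ (ε.symm i).2⟩
  have hfε : ∀ i, ((ε.symm (f i)) : Set (PG1 F)) = diagD F γ • (ε.symm i : Set (PG1 F)) := by
    intro i; simp only [f, Equiv.symm_apply_apply]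
  have hf : Function.Injective f := by
    intro i j hij
    have h1 := hfε i
    rw [hij, hfε j] at h1
    exact ε.symm.injective (Subtype.ext (smul_left_cancel _ h1.symm))
  have hB : ∀ B ∈ 𝓑, ptInf F ∈ B → ptx F 0 ∈ B → ∃ i, B = ε.symm i := by
    intro B h1 h2 h3
    exact ⟨ε ⟨B, h1, h2, h3⟩, by rw [Equiv.symm_apply_apply]⟩
  have hp : ∀ n : ℕ, diagD F (γ ^ n) ∈ PSLsub F ∧ diagD F (γ ^ n) (ptInf F) = ptInf F ∧
      diagD F (γ ^ n) (ptx F 0) = ptx F 0 :=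
    fun n => ⟨diagD_mem F _, diagD_inf F _, by rw [diagD_ptx, mul_zero]⟩
  have hpow1 : diagD F (γ ^ 1) = diagD F γ := by rw [pow_one]
  have hpow2 : diagD F (γ ^ 2) = diagD F γ * diagD F γ := by rw [← diagD_pow, pow_two]
  have hpow3 : diagD F (γ ^ 3) = diagD F γ * (diagD F γ * diagD F γ) := by
    rw [← diagD_pow, pow_succ', pow_two]
  rcases perm_three f hf with h | h | ⟨h, h'⟩
  · refine ⟨1, by simp, ?_, by omega⟩
    intro B h1 h2 h3
    obtain ⟨i, rfl⟩ := hB B h1 h2 h3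
    rw [hpow1, ← hfε, h]
  · refine ⟨2, by simp, ?_, by omega⟩
    intro B h1 h2 h3
    obtain ⟨i, rfl⟩ := hB B h1 h2 h3
    rw [hpow2, mul_smul, ← hfε, ← hfε, h]
  · refine ⟨3, by simp, ?_, ?_⟩
    · intro B h1 h2 h3
      obtain ⟨i, rfl⟩ := hB B h1 h2 h3
      rw [hpow3, mul_smul, mul_smul, ← hfε, ← hfε, ← hfε, h]
    · intro _ B h1 h2 h3 C h4 h5 h6
      obtain ⟨i, rfl⟩ := hB B h1 h2 h3
      obtain ⟨j, rfl⟩ := hB C h4 h5 h6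
      rcases h' i j with rfl | rfl | rfl
      · exact ⟨1, one_mem _, rfl, rfl, one_smul _ _⟩
      · exact ⟨_, (hp 1).1, (hp 1).2.1, (hp 1).2.2, by rw [hpow1, ← hfε]⟩
      · exact ⟨_, (hp 2).1, (hp 2).2.1, (hp 2).2.2, by
          rw [hpow2, mul_smul, ← hfε, ← hfε]⟩

/-- The nonzero coordinates of a set of points fixed by `x ↦ γ^(2e) x` are closed under
multiplication by `⟨γ^(2e)⟩`. -/
lemma unitsOf_saturated [Finite F] (B : Set (PG1 F)) (γ : Fˣ) (e : ℕ)
    (hB : diagD F (γ ^ e) • B = B) :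
    ∀ m ∈ Subgroup.zpowers (γ ^ (2 * e)), ∀ a ∈ unitsOf F B, m * a ∈ unitsOf F B := by
  have hone : ∀ a ∈ unitsOf F B, γ ^ (2 * e) * a ∈ unitsOf F B := by
    intro a ha
    have h1 : diagD F (γ ^ e) • ptx F (a : F) ∈ diagD F (γ ^ e) • B :=
      Set.smul_mem_smul_set ha
    rw [hB, Equiv.Perm.smul_def, diagD_ptx] at h1
    change ptx F _ ∈ B
    convert h1 using 2
    push_cast
    ring
  intro m hm a ha
  obtain ⟨n, rfl⟩ := mem_powers_iff_mem_zpowers.mpr hm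
  induction n with
  | zero => simpa using ha
  | succ n ih =>
    have := hone _ (ih ⟨n, by simp⟩)
    rwa [← mul_assoc, ← pow_succ'] at this

end Blocks

/-! ### The design on the projective line -/

section LineDesign

variable (F : Type) [Field F]

lemma mem_canonicalSubline_iff (K : Subfield F) (p : PG1 F) :
    p ∈ canonicalSubline F K ↔ p = ptInf F ∨ ∃ x ∈ K, p = ptx F x := by
  constructor
  · rintro ⟨v, hv, hK, rfl⟩
    by_cases h : v 1 = 0
    · exact Or.inl (mk_eq_inf F v hv h)
    · exact Or.inr ⟨_, div_mem (hK 0) (hK 1), mk_eq_ptx F v hv h⟩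
  · rintro (rfl | ⟨x, hx, rfl⟩)
    · exact ⟨_, _, fun i => by fin_cases i <;> simp [one_mem, zero_mem], rfl⟩
    · exact ⟨_, _, fun i => by fin_cases i <;> simp [hx, one_mem], rfl⟩

/-- `{0, ∞} ∪ c K*` is a `K`-subline, the image of the canonical one under `x ↦ c x`. -/
lemma isBaerSubline_of_coset (K : Subfield F) (B : Set (PG1 F)) (h1 : ptInf F ∈ B)
    (h2 : ptx F 0 ∈ B) (c : Fˣ)
    (hc : ∀ a : Fˣ, a ∈ unitsOf F B ↔ ((c⁻¹ * a : Fˣ) : F) ∈ K) : IsBaerSubline F K B := by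
  let g : GL (Fin 2) F := Matrix.GeneralLinearGroup.mkOfDetNeZero !![(c : F), 0; 0, 1]
    (by simp [Matrix.det_fin_two])
  have hgm : (g : Matrix (Fin 2) (Fin 2) F) = !![(c : F), 0; 0, 1] := rfl
  have hginf : projSemilinear F (RingEquiv.refl F) g (ptInf F) = ptInf F := by
    obtain ⟨hw, e⟩ := projSemilinear_mk F (RingEquiv.refl F) g ![1, 0]
      (fun h => one_ne_zero (congrFun h 0))
    conv_lhs => rw [ptInf, e]
    rw [mk_eq_inf]
    simp [hgm, Matrix.mulVec, dotProduct, Fin.sum_univ_two]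
  have hgx : ∀ x, projSemilinear F (RingEquiv.refl F) g (ptx F x) = ptx F (c * x) := by
    intro x
    obtain ⟨hw, e⟩ := projSemilinear_mk F (RingEquiv.refl F) g ![x, 1]
      (fun h => one_ne_zero (congrFun h 1))
    conv_lhs => rw [ptx, e]
    rw [mk_eq_ptx]
    · simp [hgm, Matrix.mulVec, dotProduct, Fin.sum_univ_two]
    · simp [hgm, Matrix.mulVec, dotProduct, Fin.sum_univ_two]
  refine ⟨g, ?_⟩
  ext p
  constructor
  · intro hp
    rcases pt_cases F p with rfl | ⟨x, rfl⟩
    · exact ⟨ptInf F, (mem_canonicalSubline_iff F K _).mpr (Or.inl rfl), hginf⟩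
    · refine ⟨ptx F (c⁻¹ * x), (mem_canonicalSubline_iff F K _).mpr (Or.inr ⟨_, ?_, rfl⟩), ?_⟩
      · by_cases hx : x = 0
        · rw [hx, mul_zero]; exact zero_mem K
        · have := (hc (Units.mk0 x hx)).mp hp
          simpa using this
      · rw [hgx, ← mul_assoc, Units.mul_inv, one_mul]
  · rintro ⟨y, hy, rfl⟩
    rcases (mem_canonicalSubline_iff F K _).mp hy with rfl | ⟨x, hx, rfl⟩
    · rw [hginf]; exact h1
    · rw [hgx]
      by_cases hx0 : x = 0
      · rw [hx0, mul_zero]; exact h2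
      · have : c * Units.mk0 x hx0 ∈ unitsOf F B := by
          rw [hc, inv_mul_cancel_left]; exact hx
        exact this

/-- In a finite field of odd order, `c / σ(c)` is a square for every automorphism `σ`. -/
lemma isSquare_div_aut [Fintype F] (h2 : ringChar F ≠ 2) (σ : F ≃+* F) (c : F) (hc : c ≠ 0) :
    IsSquare (c / σ c) := by
  have hσ : σ c ≠ 0 := by simpa using hc
  rw [FiniteField.isSquare_iff h2 (div_ne_zero hc hσ), div_pow, ← map_pow]
  rcases FiniteField.pow_dichotomy h2 hc with h | h <;> rw [h] <;> simp

/-- A `PSL(2,q)`-invariant `2-(q+1,k,3)` design on the line with `3 ∣ r` and `q ≥ 5` is a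
`PSL(2,25)`-orbit of Baer sublines, and the permutations preserving it and normalizing
`PSL(2,25)` lie in `PΣL(2,25)`. -/
lemma line_design [Fintype F] (q k r : ℕ) (hF : Fintype.card F = q) (hq5 : 5 ≤ q)
    (𝓑 : Set (Set (PG1 F))) (hD : IsDesign 𝓑 k 3) (hk : 2 < k) (hkq : k < q)
    (hr : ∀ x, repNum 𝓑 x = r) (h3r : 3 ∣ r)
    (hinv : ∀ n ∈ PSLsub F, ∀ B ∈ 𝓑, n • B ∈ 𝓑) :
    q = 25 ∧ ∃ K : Subfield F, Nat.card K = 5 ∧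
      ∃ s₀ : Set (PG1 F), IsBaerSubline F K s₀ ∧
        (∀ B, B ∈ 𝓑 ↔ B ∈ MulAction.orbit (PSLsub F) s₀) ∧
        ∀ g : Equiv.Perm (PG1 F), (∀ n ∈ PSLsub F, g * n * g⁻¹ ∈ PSLsub F) →
          (∀ B ∈ 𝓑, g • B ∈ 𝓑) → g ∈ PSigmaLsub F := by
  classical
  have := finite_PG1 F
  have hcardPG : Nat.card (PG1 F) = q + 1 := by
    rw [← hF, ← Nat.card_eq_fintype_card]
    exact Projectivization.card_of_finrank_two (k := F) (V := Fin 2 → F) (by simp)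
  obtain ⟨γ, hγ⟩ := IsCyclic.exists_generator (α := Fˣ)
  have hordγ : orderOf γ = q - 1 := by
    rw [orderOf_eq_card_of_forall_mem_zpowers hγ, Nat.card_eq_fintype_card, Fintype.card_units, hF]
  have hne : ptInf F ≠ ptx F 0 := (ptx_ne_inf F 0).symm
  obtain ⟨e, he, hefix, hetrans⟩ := blocks_through_two F 𝓑 (hD.pair_count _ _ hne) hinv γ
  -- a block through `0` and `∞`
  obtain ⟨B₀, hB₀, hB₀i, hB₀z⟩ : ∃ B ∈ 𝓑, ptInf F ∈ B ∧ ptx F 0 ∈ B := by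
    by_contra hcon
    have h1 := hD.pair_count _ _ hne
    have h2 : {B : Set (PG1 F) | B ∈ 𝓑 ∧ ptInf F ∈ B ∧ ptx F 0 ∈ B} = ∅ := by
      ext B
      simp only [Set.mem_ofPred_eq, Set.mem_empty_iff_false, iff_false]
      exact fun h => hcon ⟨B, h.1, h.2⟩
    rw [h2] at h1
    simp at h1
  have hMcard : Nat.card (Subgroup.zpowers (γ ^ (2 * e))) = (q - 1) / Nat.gcd (q - 1) (2 * e) := by
    rw [Nat.card_zpowers, orderOf_pow, hordγ]
  have hdvd : (q - 1) ∣ Nat.gcd (q - 1) (2 * e) * (k - 2) := by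
    have h1 := card_dvd_of_saturated _ _ (unitsOf_saturated F B₀ γ e (hefix B₀ hB₀ hB₀i hB₀z))
    have h2 := unitsOf_card F B₀ hB₀i hB₀z
    rw [hD.block_card B₀ hB₀] at h2
    have h3 : k - 2 = Nat.card (unitsOf F B₀) := by omega
    rw [h3]
    have h4 := Nat.mul_dvd_mul_left (Nat.gcd (q - 1) (2 * e)) h1
    rwa [hMcard, Nat.mul_div_cancel' (Nat.gcd_dvd_left _ _)] at h4
  obtain ⟨p, hp⟩ := CharP.exists F
  have hprime : p.Prime := CharP.char_is_prime F p
  obtain ⟨f, -, hf⟩ := FiniteField.card F p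
  have hpair := design_pair_count 𝓑 k r 3 hD (ptInf F) (hr _)
  have hflags := design_flag_count 𝓑 k r hD.block_card hr
  rw [hcardPG] at hpair hflags
  obtain ⟨rfl, rfl, rfl⟩ := parameter_arith p f q k r _ e hprime (hF.symm.trans hf) hq5 hk hkq h3r
    (by simpa using hpair) hflags he hdvd
  have hp5 : p = 5 := by
    have h1 : p ∣ 5 ^ 2 := by
      rw [show 5 ^ 2 = Fintype.card F by rw [hF]; norm_num, hf]
      exact dvd_pow_self p f.ne_zero
    exact (Nat.prime_dvd_prime_iff_eq hprime (by norm_num)).mp (hprime.dvd_of_dvd_pow h1)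
  subst hp5
  have : Fact (Nat.Prime 5) := ⟨hprime⟩
  have hchar : ringChar F ≠ 2 := by
    rw [ringChar.eq F 5]; norm_num
  have htwo : (2 : F) ≠ 0 := Ring.two_ne_zero hchar
  refine ⟨rfl, ?_⟩
  have hM : ∀ m : Fˣ, m ∈ Subgroup.zpowers (γ ^ (2 * 3)) ↔ m ^ 4 = 1 := by
    intro m
    constructor
    · rintro ⟨i, rfl⟩
      have h1 : γ ^ 24 = 1 := by
        have := pow_orderOf_eq_one γ
        rwa [hordγ] at this
      change ((γ ^ (2 * 3)) ^ i) ^ 4 = 1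
      rw [← zpow_natCast, zpow_comm, zpow_natCast, ← pow_mul, h1, _root_.one_zpow]
    · intro hm
      obtain ⟨i, rfl⟩ := mem_powers_iff_mem_zpowers.mpr (hγ m)
      simp only at hm ⊢
      rw [← pow_mul, ← orderOf_dvd_iff_pow_eq_one, hordγ] at hm
      obtain ⟨j, hj⟩ : 6 ∣ i := by omega
      rw [hj, show γ ^ (6 * j) = (γ ^ (2 * 3)) ^ j by rw [← pow_mul]]
      exact Subgroup.npow_mem_zpowers _ _
  have hM4 : Nat.card (Subgroup.zpowers (γ ^ (2 * 3))) = 4 := by rw [hMcard]; rfl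
  let K : Subfield F := (frobenius F 5).eqLocusField (RingHom.id F)
  have hK : ∀ m : Fˣ, (m : F) ∈ K ↔ m ∈ Subgroup.zpowers (γ ^ (2 * 3)) := by
    intro m
    rw [hM, RingHom.mem_eqLocusField, frobenius_def, RingHom.id_apply, Units.ext_iff,
      pow_succ]
    push_cast
    exact ⟨fun h => mul_right_cancel₀ m.ne_zero (h.trans (one_mul _).symm),
      fun h => by rw [h, one_mul]⟩
  have hKcard : Nat.card K = 5 := by
    have h1 : (K : Set F) = insert 0 ((fun m : Fˣ => (m : F)) ''
        (Subgroup.zpowers (γ ^ (2 * 3)) : Set Fˣ)) := by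
      ext x
      constructor
      · intro hx
        by_cases hx0 : x = 0
        · exact Or.inl hx0
        · exact Or.inr ⟨Units.mk0 x hx0, (hK _).mp hx, rfl⟩
      · rintro (rfl | ⟨m, hm, rfl⟩)
        · exact zero_mem K
        · exact (hK m).mpr hm
    have h2 : Nat.card K = (K : Set F).ncard := rfl
    rw [h2, h1, Set.ncard_insert_of_notMem, Set.ncard_image_of_injective _ Units.val_injective,
      ← Nat.card_coe_set_eq]
    · rw [show Nat.card ((Subgroup.zpowers (γ ^ (2 * 3)) : Set Fˣ)) = 4 from hM4]
    · rintro ⟨m, -, hm⟩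
      exact m.ne_zero hm
  -- the coordinates of `B₀` form a single coset `c M`
  have hA4 : Nat.card (unitsOf F B₀) = 4 := by
    have h2 := unitsOf_card F B₀ hB₀i hB₀z
    rw [hD.block_card B₀ hB₀] at h2
    omega
  obtain ⟨c, hc⟩ : (unitsOf F B₀).Nonempty := by
    by_contra hcon
    rw [Set.not_nonempty_iff_eq_empty] at hcon
    rw [hcon] at hA4
    simp at hA4
  have hsat := unitsOf_saturated F B₀ γ 3 (hefix B₀ hB₀ hB₀i hB₀z)
  have hcoset : (fun m : Fˣ => m * c) '' (Subgroup.zpowers (γ ^ (2 * 3)) : Set Fˣ) =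
      unitsOf F B₀ := by
    apply Set.eq_of_subset_of_ncard_le
    · rintro _ ⟨m, hm, rfl⟩
      exact hsat m hm c hc
    · rw [Set.ncard_image_of_injective _ (mul_left_injective c), ← Nat.card_coe_set_eq,
        ← Nat.card_coe_set_eq, hA4]
      exact hM4.ge
    · exact Set.toFinite _
  have hmemA : ∀ a : Fˣ, a ∈ unitsOf F B₀ ↔ c⁻¹ * a ∈ Subgroup.zpowers (γ ^ (2 * 3)) := by
    intro a
    rw [← hcoset]
    constructor
    · rintro ⟨m, hm, rfl⟩
      simpa [mul_comm] using hm
    · intro h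
      exact ⟨_, h, by simp [mul_comm]⟩
  refine ⟨K, hKcard, B₀, ?_, ?_, ?_⟩
  · exact isBaerSubline_of_coset F K B₀ hB₀i hB₀z c fun a => by rw [hmemA, hK]
  · intro B
    constructor
    · intro hB
      have hcB := hD.block_card B hB
      have h2 : 1 < B.ncard := by rw [← Nat.card_coe_set_eq, hcB]; norm_num
      obtain ⟨x, y, hx, hy, hxy⟩ := (Set.one_lt_ncard_iff).mp h2
      obtain ⟨n, hn, hnx, hny⟩ := PSL_two_trans F x y hxy
      obtain ⟨m, hm, -, -, hmB⟩ := hetrans rfl B₀ hB₀ hB₀i hB₀z (n • B) (hinv n hn B hB)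
        ⟨x, hx, hnx⟩ ⟨y, hy, hny⟩
      refine ⟨⟨n⁻¹ * m, mul_mem (inv_mem hn) hm⟩, ?_⟩
      change (n⁻¹ * m) • B₀ = B
      rw [mul_smul, hmB, inv_smul_smul]
    · rintro ⟨n, rfl⟩
      exact hinv n.1 n.2 B₀ hB₀
  · intro g hg hgB
    have hgne : g (ptInf F) ≠ g (ptx F 0) := fun h => hne (g.injective h)
    obtain ⟨n, hn, hni, hnz⟩ := PSL_two_trans F _ _ hgne
    have hnB : (n * g) • B₀ ∈ 𝓑 := by
      rw [mul_smul]; exact hinv n hn _ (hgB B₀ hB₀)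
    obtain ⟨m, hm, hmi, hmz, hmB⟩ := hetrans rfl _ hnB
      ⟨_, hB₀i, hni⟩ ⟨_, hB₀z, hnz⟩ B₀ hB₀ hB₀i hB₀z
    -- multiplying by elements of `PSL(2,25)`, the permutation fixes `0`, `∞` and `B₀`
    set g' := m * n * g with hg'
    have hmn : m * n ∈ PSLsub F := mul_mem hm hn
    have hg'i : g' (ptInf F) = ptInf F := by
      rw [hg', Equiv.Perm.mul_apply, Equiv.Perm.mul_apply, hni, hmi]
    have hg'z : g' (ptx F 0) = ptx F 0 := by
      rw [hg', Equiv.Perm.mul_apply, Equiv.Perm.mul_apply, hnz, hmz]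
    have hg'B : g' • B₀ = B₀ := by rw [hg', mul_assoc, mul_smul, hmB]
    obtain ⟨a, σ, ha, hσ⟩ := normalizer_fix_two F htwo g' (by
      intro t ht
      have : g' * t * g'⁻¹ = (m * n) * (g * t * g⁻¹) * (m * n)⁻¹ := by rw [hg']; group
      rw [this]
      exact mul_mem (mul_mem hmn (hg t ht)) (inv_mem hmn)) hg'i hg'z
    have hσc : σ (c : F) ≠ 0 := by simp
    have hmem : ptx F (a * σ c) ∈ B₀ := by
      rw [← hσ, ← hg'B]
      exact ⟨_, hc, rfl⟩
    have hmem' : Units.mk0 (a * σ c) (mul_ne_zero ha hσc) ∈ unitsOf F B₀ := hmem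
    rw [hmemA] at hmem'
    obtain ⟨i, hi⟩ := mem_powers_iff_mem_zpowers.mpr hmem'
    have hi' : ((γ : F) ^ (3 * i)) ^ 2 = (c : F)⁻¹ * (a * σ c) := by
      have := congrArg (fun u : Fˣ => (u : F)) hi
      simp only [Units.val_pow_eq_pow_val, Units.val_mul, Units.val_mk0,
        Units.val_inv_eq_inv_val] at this
      rw [← this]; ring
    obtain ⟨d, hd⟩ := isSquare_div_aut F hchar σ c c.ne_zero
    have had : a = ((γ : F) ^ (3 * i) * d) ^ 2 := by
      rw [mul_pow, hi', pow_two d, ← hd]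
      field_simp
    have hg'mem : g' ∈ PSigmaLsub F := by
      refine mem_PSigmaL_of_square F g' σ ((γ : F) ^ (3 * i) * d) ?_ hg'i ?_
      · rintro h0
        rw [h0] at had
        exact ha (by rw [had]; simp)
      · intro x; rw [hσ, ← had]
    have : g = (m * n)⁻¹ * g' := by rw [hg']; group
    rw [this]
    exact mul_mem (inv_mem (PSL_le_PSigmaL F hmn)) hg'mem

end LineDesign

/-! ### Transfer to the projective line -/

section Transfer

/-- On five points a `2-(5,3,3)` design is complete: two points lie in only three triples, so
all of these have to be blocks. -/
lemma complete_of_card_five {Pt : Type*} [Finite Pt] (hv : Nat.card Pt = 5)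
    (𝓑 : Set (Set Pt)) (hD : IsDesign 𝓑 3 3) (B : Set Pt) : B ∈ 𝓑 ↔ Nat.card B = 3 := by
  refine ⟨hD.block_card B, fun hB => ?_⟩
  rw [Nat.card_coe_set_eq, Set.ncard_eq_three] at hB
  obtain ⟨x, y, z, hxy, hxz, hyz, rfl⟩ := hB
  have hsub : {C : Set Pt | C ∈ 𝓑 ∧ x ∈ C ∧ y ∈ C} ⊆
      (fun w => ({x, y, w} : Set Pt)) '' ({x, y} : Set Pt)ᶜ := by
    rintro C ⟨hC, hx, hy⟩
    have h3 := hD.block_card C hC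
    rw [Nat.card_coe_set_eq, Set.ncard_eq_three] at h3
    have hxyC : ({x, y} : Set Pt) ⊆ C := by
      rintro w (rfl | rfl)
      · exact hx
      · exact hy
    have hdiff : (C \ {x, y}).ncard = 1 := by
      rw [Set.ncard_sdiff hxyC, Set.ncard_pair hxy, ← Nat.card_coe_set_eq, hD.block_card C hC]
    obtain ⟨w, hw⟩ := Set.ncard_eq_one.mp hdiff
    have hwm : w ∈ C \ {x, y} := by rw [hw]; rfl
    refine ⟨w, hwm.2, ?_⟩
    have := Set.sdiff_union_of_subset hxyC
    rw [hw] at this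
    rw [← this]
    ext u
    simp only [Set.mem_insert_iff, Set.mem_singleton_iff, Set.mem_union]
    tauto
  have hcompl : (({x, y} : Set Pt)ᶜ).ncard = 3 := by
    have h1 := Set.ncard_add_ncard_compl ({x, y} : Set Pt)
    rw [Set.ncard_pair hxy, hv] at h1
    omega
  have heq := Set.eq_of_subset_of_ncard_le hsub (by
    rw [← Nat.card_coe_set_eq {C : Set Pt | C ∈ 𝓑 ∧ x ∈ C ∧ y ∈ C}, hD.pair_count x y hxy,
      ← hcompl]
    exact Set.ncard_image_le) (Set.toFinite _)
  have hmem : ({x, y, z} : Set Pt) ∈ {C : Set Pt | C ∈ 𝓑 ∧ x ∈ C ∧ y ∈ C} := by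
    rw [heq]
    refine ⟨z, ?_, rfl⟩
    rintro (h | h)
    · exact hxz h.symm
    · exact hyz h.symm
  exact hmem.1

/-- The image of a family of subsets under a bijection of the ambient sets. -/
def imageBlocks {Pt Qt : Type*} (e : Pt ≃ Qt) (𝓑 : Set (Set Pt)) : Set (Set Qt) :=
  {C | e ⁻¹' C ∈ 𝓑}

lemma image_mem_imageBlocks {Pt Qt : Type*} (e : Pt ≃ Qt) (𝓑 : Set (Set Pt)) (B : Set Pt) :
    e '' B ∈ imageBlocks e 𝓑 ↔ B ∈ 𝓑 := by
  change e ⁻¹' (e '' B) ∈ 𝓑 ↔ B ∈ 𝓑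
  rw [Set.preimage_image_eq _ e.injective]

lemma card_imageBlocks {Pt Qt : Type*} (e : Pt ≃ Qt) (P : Set Pt → Prop) :
    Nat.card {C : Set Qt | P (e ⁻¹' C)} = Nat.card {B : Set Pt | P B} := by
  refine Nat.card_congr ⟨fun C => ⟨e ⁻¹' C.1, C.2⟩, fun B => ⟨e '' B.1, ?_⟩, ?_, ?_⟩
  · have : e ⁻¹' (e '' B.1) = B.1 := Set.preimage_image_eq _ e.injective
    change P (e ⁻¹' (e '' B.1))
    rw [this]; exact B.2
  · intro C; exact Subtype.ext (Set.image_preimage_eq _ e.surjective)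
  · intro B; exact Subtype.ext (Set.preimage_image_eq _ e.injective)

lemma isDesign_imageBlocks {Pt Qt : Type*} (e : Pt ≃ Qt) (𝓑 : Set (Set Pt)) (k l : ℕ)
    (hD : IsDesign 𝓑 k l) : IsDesign (imageBlocks e 𝓑) k l := by
  refine ⟨fun C hC => ?_, fun x y hxy => ?_⟩
  · rw [← hD.block_card _ hC, Nat.card_coe_set_eq, Nat.card_coe_set_eq,
      Set.ncard_preimage_of_injective_subset_range e.injective (by simp)]
  · rw [← hD.pair_count (e.symm x) (e.symm y) fun h => hxy (e.symm.injective h),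
      ← card_imageBlocks e]
    congr! 3 with C
    simp [imageBlocks]

lemma repNum_imageBlocks {Pt Qt : Type*} (e : Pt ≃ Qt) (𝓑 : Set (Set Pt)) (x : Qt) :
    repNum (imageBlocks e 𝓑) x = repNum 𝓑 (e.symm x) := by
  rw [repNum, repNum, ← card_imageBlocks e]
  congr! 3 with C
  simp [imageBlocks]

/-- Transitive actions of isomorphic groups whose point stabilizers correspond are equivalent. -/
lemma exists_equivariant_equiv {A B P Q : Type*} [Group A] [Group B] [MulAction A P]
    [MulAction B Q] [MulAction.IsPretransitive A P] [MulAction.IsPretransitive B Q]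
    (ι : A ≃* B) (x : P) (y : Q)
    (h : (MulAction.stabilizer A x).map ι.toMonoidHom = MulAction.stabilizer B y) :
    ∃ e : P ≃ Q, ∀ (a : A) (z : P), e (a • z) = ι a • e z := by
  have hst : ∀ a : A, ι a • y = y ↔ a • x = x := by
    intro a
    rw [← MulAction.mem_stabilizer_iff, ← h, ← MulAction.mem_stabilizer_iff]
    exact Subgroup.mem_map_equiv.trans (by simp)
  have hst2 : ∀ a b : A, ι a • y = ι b • y ↔ a • x = b • x := by
    intro a b
    rw [← inv_smul_eq_iff, ← mul_smul, ← map_inv, ← map_mul, hst, mul_smul, inv_smul_eq_iff]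
  choose f hf using fun z : P => MulAction.exists_smul_eq A x z
  have hfe : ∀ a : A, ι (f (a • x)) • y = ι a • y := fun a => (hst2 _ _).mpr (hf _)
  refine ⟨Equiv.ofBijective (fun z => ι (f z) • y) ⟨fun z w hzw => ?_, fun w => ?_⟩, ?_⟩
  · have := (hst2 _ _).mp hzw
    rwa [hf, hf] at this
  · obtain ⟨b, rfl⟩ := MulAction.exists_smul_eq B y w
    exact ⟨ι.symm b • x, by simp only [hfe]; simp⟩
  · intro a z
    obtain ⟨b, rfl⟩ := MulAction.exists_smul_eq A x z
    change ι (f (a • b • x)) • y = ι a • ι (f (b • x)) • y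
    rw [← mul_smul, hfe, hfe, map_mul, mul_smul]

end Transfer

end FT

/-- In the setting of a non-trivial, non-symmetric flag-transitive,
point-primitive `2-(v,k,3)` design with `3 ∣ r`, almost simple automorphism group `G` with
socle `X ≅ PSL(2,q)` acting point-primitively with maximal point stabilizer `X_α`:
if `X_α` is (isomorphic to) the Borel subgroup `C_p^f ⋊ C_{(q−1)/gcd(2,q−1)}`, the stabilizer
of a point in the natural action of `PSL(2,q)` on the projective line `PG(1,q)` (so that
`v = q + 1`), then either (1) `q = 4` and `D` is the complete `2-(5,3,3)` design, and
`PSL(2,4) ⊴ G ≤ PΓL(2,4)`; or (2) `q = 25` and `D` is the `2-(26,6,3)` design whose blocks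
form one `PSL(2,25)`-orbit of Baer sublines `PG(1,5)` of `PG(1,25)`, and
`PSL(2,25) ⊴ G ≤ PΣL(2,25)`. -/
theorem stmt_17
    (q : ℕ) (hq4 : 4 ≤ q)
    (F : Type) [Field F] [Fintype F] (hF : Fintype.card F = q)
    {Pt : Type*} [Fintype Pt] {G : Type*} [Group G] [MulAction G Pt] [FaithfulSMul G Pt]
    -- `D = (Pt, 𝓑)` is a non-trivial, non-symmetric `2-(v,k,3)` design …
    (𝓑 : Set (Set Pt)) (v k : ℕ) (hv : Nat.card Pt = v)
    (hD : IsDesign 𝓑 k 3) (hnt : 2 < k ∧ k < v - 1)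
    (hnonsym : Nat.card 𝓑 ≠ v)
    -- … whose replication number `r` is divisible by 3, …
    (r : ℕ) (hr : ∀ x : Pt, repNum 𝓑 x = r) (h3r : 3 ∣ r)
    -- … admitting the flag-transitive, point-primitive automorphism group `G`, …
    (hacts : ActsOn G 𝓑) (hflag : FlagTransitive G 𝓑)
    (hprim : PointPrimitive G Pt)
    -- … where `G` is almost simple with socle `X ≅ PSL(2,q)` (so `PSL(2,q) ⊴ G ≤ PΓL(2,q)`):
    (X : Subgroup G) (hXnormal : X.Normal)
    (hXiso : Nonempty (X ≃* PSL2 F))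
    (hXcent : Subgroup.centralizer (X : Set G) = ⊥)
    -- `X` acts point-primitively on `D`, with maximal point stabilizer `X_α`:
    (hXprim : PointPrimitive X Pt)
    (α : Pt) (hmax : IsCoatom (MulAction.stabilizer X α))
    -- `X_α` is the stabilizer of a point in the natural action of `PSL(2,q)` on `PG(1,q)`
    -- (a Borel subgroup `C_p^f ⋊ C_{(q−1)/gcd(2,q−1)}`), so that `v = q + 1`:
    (hBorel : ∃ p₀ : PG1 F, Nonempty
      ((MulAction.stabilizer X α) ≃* (MulAction.stabilizer (PSLsub F) p₀)))
    (hvq : v = q + 1) :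
    -- (1) `q = 4` and `D` is the complete `2-(5,3,3)` design
    (q = 4 ∧ ∃ e : Pt ≃ Fin 5, ∀ B : Set Pt,
        B ∈ 𝓑 ↔ (e '' B) ∈ {C : Set (Fin 5) | Nat.card C = 3}) ∨
    -- (2) `q = 25` and `D` is the `2-(26,6,3)` design whose blocks are one
    -- `PSL(2,25)`-orbit of Baer sublines, with `PSL(2,25) ⊴ G ≤ PΣL(2,25)`
    (q = 25 ∧ ∃ K : Subfield F, Nat.card K = 5 ∧
      ∃ s₀ : Set (PG1 F), IsBaerSubline F K s₀ ∧
        ∃ e : Pt ≃ PG1 F,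
          (∀ B : Set Pt, B ∈ 𝓑 ↔ (e '' B) ∈ MulAction.orbit (PSLsub F) s₀) ∧
          ∃ φ : G →* Equiv.Perm (PG1 F), Function.Injective φ ∧
            Subgroup.map φ X = PSLsub F ∧ φ.range ≤ PSigmaLsub F ∧
            ∀ (g : G) (x : Pt), e (g • x) = φ g (e x)) := by
  classical
  have : Finite Pt := inferInstance
  rcases Nat.lt_or_ge q 5 with hq5 | hq5
  · -- `q = 4` forces `v = 5` and `k = 3`
    have hq : q = 4 := by omega
    subst hq
    have hk : k = 3 := by omega
    subst hk
    have hv5 : Nat.card Pt = 5 := by omega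
    refine Or.inl ⟨rfl, Fintype.equivFinOfCardEq (by rw [← Nat.card_eq_fintype_card, hv5]), ?_⟩
    intro B
    rw [complete_of_card_five hv5 𝓑 hD B, Set.mem_ofPred_eq,
      Nat.card_image_of_injective (Equiv.injective _)]
  · right
    obtain ⟨ι₀⟩ := hXiso
    let ι : X ≃* PSLsub F := ι₀.trans (pslEquiv F)
    obtain ⟨p₀, ⟨ε⟩⟩ := hBorel
    obtain ⟨p₁, hp₁⟩ := exists_point_of_borel F ((MulAction.stabilizer X α).map ι.toMonoidHom)
      ((OrderIso.isCoatom_iff ι.mapSubgroup _).mpr hmax) p₀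
      (((MulAction.stabilizer X α).equivMapOfInjective _ ι.injective).symm.trans ε)
    have := hXprim.1
    have : MulAction.IsPretransitive (PSLsub F) (PG1 F) := by
      refine ⟨fun x y => ?_⟩
      obtain ⟨g, hg, hgx⟩ := PSL_trans F x
      obtain ⟨h, hh, hhy⟩ := PSL_trans F y
      refine ⟨⟨h⁻¹ * g, mul_mem (inv_mem hh) hg⟩, ?_⟩
      change h⁻¹ (g x) = y
      rw [hgx, ← hhy, perm_inv_apply_self]
    obtain ⟨e, he⟩ := exists_equivariant_equiv ι α p₁ hp₁
    -- the permutation representation of `G` on the line obtained by transport along `e`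
    let φ : G →* Equiv.Perm (PG1 F) := e.permCongrHom.toMonoidHom.comp (MulAction.toPermHom G Pt)
    have hφ : ∀ (g : G) (x : Pt), e (g • x) = φ g (e x) := by
      intro g x
      simp [φ, Equiv.permCongrHom]
    have hφX : ∀ x : X, φ x = ι x := by
      intro x
      ext1 y
      obtain ⟨z, rfl⟩ := e.surjective y
      rw [← hφ]
      exact he x z
    have hsmul : ∀ (g : G) (B : Set Pt), e '' (g • B) = φ g • (e '' B) := by
      intro g B
      ext y
      constructor
      · rintro ⟨_, ⟨z, hz, rfl⟩, rfl⟩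
        exact ⟨e z, ⟨z, hz, rfl⟩, (hφ g z).symm⟩
      · rintro ⟨_, ⟨z, hz, rfl⟩, rfl⟩
        exact ⟨g • z, ⟨z, hz, rfl⟩, hφ g z⟩
    have hφB : ∀ (g : G), ∀ C ∈ imageBlocks e 𝓑, φ g • C ∈ imageBlocks e 𝓑 := by
      intro g C hC
      obtain ⟨B, rfl⟩ : ∃ B, C = e '' B := ⟨_, (Set.image_preimage_eq C e.surjective).symm⟩
      rw [← hsmul, image_mem_imageBlocks]
      rw [image_mem_imageBlocks] at hC
      exact hacts g B hC
    have hmap : Subgroup.map φ X = PSLsub F := by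
      ext n
      constructor
      · rintro ⟨x, hx, rfl⟩
        have := hφX ⟨x, hx⟩
        change φ x = _ at this
        rw [this]
        exact (ι _).2
      · intro hn
        refine ⟨ι.symm ⟨n, hn⟩, (ι.symm ⟨n, hn⟩).2, ?_⟩
        rw [hφX]; simp
    obtain ⟨hq, K, hK, s₀, hs₀, horb, hnorm⟩ := line_design F q k r hF hq5 (imageBlocks e 𝓑)
      (isDesign_imageBlocks e 𝓑 k 3 hD) hnt.1 (by omega)
      (fun x => (repNum_imageBlocks e 𝓑 x).trans (hr _)) h3r (by
        intro n hn B hB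
        rw [← hmap] at hn
        obtain ⟨x, -, rfl⟩ := hn
        exact hφB x B hB)
    refine ⟨hq, K, hK, s₀, hs₀, e, fun B => ?_, φ, ?_, hmap, ?_, hφ⟩
    · rw [← horb, image_mem_imageBlocks]
    · exact e.permCongrHom.injective.comp MulAction.toPerm_injective
    · rintro _ ⟨g, rfl⟩
      refine hnorm (φ g) ?_ (hφB g)
      intro n hn
      rw [← hmap] at hn ⊢
      obtain ⟨x, hx, rfl⟩ := hn
      exact ⟨g * x * g⁻¹, hXnormal.conj_mem x hx g, by simp⟩
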